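/- arXiv:1007.4621 — 3 statements merged into one kernel-verified Lean document; each statement's English description precedes it below -/
import Mathlib

section
/- There is an absolute constant C > 0 such that for every odd prime power q, every integer d ≥ 3, and every monic square-free polynomial h ∈ 𝔽_q[X], one has |(1/#H_{d,q}) · #{F ∈ H_{d,q} : gcd(F,h) = 1} − ∏_{P | h} (1 + |P|^{−1})^{−1}| ≤ C q^{−d/2} σ(h), where the product is over the monic irreducible polynomials P dividing h and σ(h) denotes the number of monic divisors of h. -/
open Polynomial

/-!
For a finite set `S` of monic irreducibles let `N(S, m)` be the number of monic square-free
polynomials of degree `m` divisible by no `P ∈ S`, and put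
`M(S, m) = (1 - 1/q) q ^ m ∏_{P ∈ S} (1 + 1/|P|)⁻¹`. Unique factorization `F = A² B` with `B`
square-free gives `N(∅, m) = M(∅, m)` for `m ≥ 2`. Sorting by divisibility by a new prime `P`,
`N(S, m) = N(S ∪ {P}, m) + N(S ∪ {P}, m - deg P)`, and `M` obeys the same recursion. Hence so does
the error `N - M`, and solving the recursion costs a factor `(1 - |P| ^ (-1/2))⁻¹` in a bound by a
multiple of `q ^ (m/2)`. This factor is at most `2` except when `|P| < 4`, which happens for at most
three `P`; so the error is `O(2 ^ #S q ^ (m/2))`, and `2 ^ #S` is at most the number of divisors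
of `h` when `S` consists of the primes dividing `h`.
-/

namespace CoprimeCount

open UniqueFactorizationMonoid

section Factorization

variable {M : Type*} [CommMonoidWithZero M]

lemma exists_sq_mul_squarefree [WfDvdMonoid M] {x : M} (hx : x ≠ 0) :
    ∃ a b, Squarefree b ∧ a ^ 2 * b = x := by
  induction x using (wellFounded_dvdNotUnit (α := M)).induction with
  | _ x ih =>
    by_cases hsq : Squarefree x
    · exact ⟨1, x, hsq, by rw [one_pow, one_mul]⟩
    · simp only [Squarefree, not_forall] at hsq
      obtain ⟨y, ⟨z, rfl⟩, hy⟩ := hsq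
      have hz : z ≠ 0 := right_ne_zero_of_mul hx
      obtain ⟨a, b, hb, rfl⟩ :=
        ih z ⟨hz, y * y, fun h ↦ hy (isUnit_of_mul_isUnit_left h), mul_comm (y * y) z⟩ hz
      exact ⟨y * a, b, hb, by rw [mul_pow, sq y, mul_assoc]⟩

lemma dvd_of_sq_dvd_sq_mul_squarefree [GCDMonoid M] {x y b : M} (hx : x ≠ 0) (hb : Squarefree b)
    (h : x ^ 2 ∣ y ^ 2 * b) : x ∣ y := by
  obtain ⟨x', y', hx', hy', hunit⟩ := extract_gcd x y
  have hg : gcd x y ≠ 0 := fun h0 ↦ hx ((gcd_eq_zero_iff x y).1 h0).1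
  generalize gcd x y = g at hx' hy' hg
  subst hx' hy'
  have hcop : IsRelPrime (x' ^ 2) (y' ^ 2) := (gcd_isUnit_iff_isRelPrime.1 hunit).pow
  have hdvd : x' ^ 2 ∣ y' ^ 2 * b := by
    rwa [mul_pow, mul_pow, mul_assoc, mul_dvd_mul_iff_left (pow_ne_zero 2 hg)] at h
  have hx'_unit : IsUnit x' := hb x' (sq x' ▸ hcop.dvd_of_dvd_mul_left hdvd)
  exact hx'_unit.mul_right_dvd.2 (dvd_mul_right g y')

lemma injOn_prod_of_irreducible_of_normalize_eq [NormalizationMonoid M]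
    [UniqueFactorizationMonoid M] :
    Set.InjOn (fun T : Finset M ↦ ∏ p ∈ T, p) {T | ∀ p ∈ T, Irreducible p ∧ normalize p = p} := by
  have hfactors (T : Finset M) (hT : ∀ p ∈ T, Irreducible p ∧ normalize p = p) :
      normalizedFactors (∏ p ∈ T, p) = T.val := by
    rw [Finset.prod_eq_multiset_prod, Multiset.map_id',
      normalizedFactors_prod_eq _ fun p hp ↦ (hT p hp).1,
      Multiset.map_congr rfl fun p hp ↦ (hT p hp).2, Multiset.map_id']
  intro T hT U hU hTU
  rw [← Finset.val_inj, ← hfactors T hT, ← hfactors U hU]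
  exact congrArg normalizedFactors hTU

end Factorization

section Field

variable {K : Type*} [Field K]

lemma exists_monic_sq_mul_squarefree {F : K[X]} (hF : F.Monic) :
    ∃ A B : K[X], A.Monic ∧ B.Monic ∧ Squarefree B ∧ A ^ 2 * B = F := by
  classical
  obtain ⟨a, b, hb, rfl⟩ := exists_sq_mul_squarefree hF.ne_zero
  have ha0 : a ≠ 0 := fun h ↦ hF.ne_zero (by simp [h])
  refine ⟨normalize a, normalize b, monic_normalize ha0, monic_normalize hb.ne_zero,
    (associated_normalize b).squarefree_iff.1 hb, ?_⟩
  rw [sq, ← normalize_mul, ← normalize_mul, ← sq, hF.normalize_eq_self]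

lemma sq_mul_squarefree_inj {A A' B B' : K[X]} (hA : A.Monic) (hA' : A'.Monic)
    (hB : Squarefree B) (hB' : Squarefree B') (h : A ^ 2 * B = A' ^ 2 * B') :
    A = A' ∧ B = B' := by
  let : GCDMonoid K[X] := UniqueFactorizationMonoid.toGCDMonoid _
  have hdvd : A ∣ A' := dvd_of_sq_dvd_sq_mul_squarefree hA.ne_zero hB' (Dvd.intro B h)
  have hdvd' : A' ∣ A := dvd_of_sq_dvd_sq_mul_squarefree hA'.ne_zero hB (Dvd.intro B' h.symm)
  obtain rfl : A = A' := eq_of_monic_of_associated hA hA' (associated_of_dvd_dvd hdvd hdvd')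
  exact ⟨rfl, mul_left_cancel₀ (pow_ne_zero 2 hA.ne_zero) h⟩

open Classical in
lemma coe_primeFactors {h : K[X]} (hh : h ≠ 0) :
    (primeFactors h : Set K[X]) = {P | P.Monic ∧ Irreducible P ∧ P ∣ h} := by
  ext P
  rw [Finset.mem_coe, mem_primeFactors, Polynomial.mem_normalizedFactors_iff hh]
  exact and_left_comm

open Classical in
lemma isCoprime_iff_forall_primeFactors_not_dvd {F h : K[X]} (hh : h ≠ 0) :
    IsCoprime F h ↔ ∀ P ∈ primeFactors h, ¬ P ∣ F := by
  simp only [mem_primeFactors, Polynomial.mem_normalizedFactors_iff hh]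
  constructor
  · rintro hcop P ⟨hP, -, hPh⟩ hPF
    exact hP.not_isUnit (hcop.isUnit_of_dvd' hPF hPh)
  · intro hnot
    refine isCoprime_of_irreducible_dvd (fun h0 ↦ hh h0.2) fun z hz hzF hzh ↦ ?_
    obtain ⟨P, hPm, hP, hPz⟩ := exists_monic_irreducible_factor z hz.not_isUnit
    exact hnot P ⟨hP, hPm, hPz.trans hzh⟩ (hPz.trans hzF)

open Classical in
lemma two_pow_card_primeFactors_le_ncard {h : K[X]} (hh : h ≠ 0) :
    2 ^ (primeFactors h).card ≤ {D : K[X] | D.Monic ∧ D ∣ h}.ncard := by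
  have hfinite : {D : K[X] | D.Monic ∧ D ∣ h}.Finite := by
    have := fintypeSubtypeMonicDvd h hh
    exact Finite.of_fintype {D : K[X] // D.Monic ∧ D ∣ h}
  have hmem {P : K[X]} (hP : P ∈ primeFactors h) : P.Monic ∧ Irreducible P ∧ P ∣ h :=
    (coe_primeFactors hh).subset hP
  have hinj : Set.InjOn (fun T : Finset K[X] ↦ ∏ P ∈ T, P) (primeFactors h).powerset := by
    refine injOn_prod_of_irreducible_of_normalize_eq.mono ?_
    intro T hT P hPT
    obtain ⟨hPm, hP, -⟩ := hmem (Finset.mem_powerset.1 hT hPT)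
    exact ⟨hP, hPm.normalize_eq_self⟩
  rw [← Finset.card_powerset, ← Set.ncard_coe_finset]
  refine Set.ncard_le_ncard_of_injOn _ (fun T hT ↦ ?_) hinj hfinite
  have hT : T ⊆ primeFactors h := Finset.mem_powerset.1 hT
  refine ⟨monic_prod_of_monic _ _ fun P hP ↦ (hmem (hT hP)).1, ?_⟩
  exact (Finset.prod_dvd_prod_of_subset _ _ _ hT).trans radical_dvd_self

end Field

section Counting

lemma finite_monic_natDegree_eq {R : Type*} [CommRing R] [Nontrivial R] [Finite R] (n : ℕ) :
    {F : R[X] | F.Monic ∧ F.natDegree = n}.Finite :=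
  Finite.of_equiv _ ((monicEquivDegreeLT n).trans (degreeLTEquiv R n).toEquiv).symm

variable {Fq : Type*} [Field Fq] [Fintype Fq]

variable (Fq) in
/-- The monic polynomials of degree `n` over a finite field, as a finset so that they can be
counted and filtered. -/
noncomputable def monics (n : ℕ) : Finset Fq[X] :=
  (finite_monic_natDegree_eq n).toFinset

lemma mem_monics {n : ℕ} {F : Fq[X]} : F ∈ monics Fq n ↔ F.Monic ∧ F.natDegree = n := by
  simp [monics]

lemma card_monics (n : ℕ) : (monics Fq n).card = Fintype.card Fq ^ n := by
  rw [monics, ← Set.ncard_eq_toFinset_card _ (finite_monic_natDegree_eq n), ← Nat.card_coe_set_eq]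
  refine (Nat.card_congr ((monicEquivDegreeLT n).trans (degreeLTEquiv Fq n).toEquiv)).trans ?_
  simp

open Classical in
/-- The monic square-free polynomials of degree `n` divisible by no member of `S`; its cardinality
is written `N(S, n)` above, and `S = ∅` gives `H_{n,q}`. -/
noncomputable def squarefreeAvoiding (S : Finset Fq[X]) (n : ℕ) : Finset Fq[X] :=
  {F ∈ monics Fq n | Squarefree F ∧ ∀ P ∈ S, ¬ P ∣ F}

lemma mem_squarefreeAvoiding {S : Finset Fq[X]} {n : ℕ} {F : Fq[X]} :
    F ∈ squarefreeAvoiding S n ↔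
      F.Monic ∧ F.natDegree = n ∧ Squarefree F ∧ ∀ P ∈ S, ¬ P ∣ F := by
  simp [squarefreeAvoiding, mem_monics, and_assoc]

lemma coe_squarefreeAvoiding_empty (n : ℕ) :
    (squarefreeAvoiding (∅ : Finset Fq[X]) n : Set Fq[X]) =
      {F | F.Monic ∧ Squarefree F ∧ F.natDegree = n} := by
  ext F
  simp [mem_squarefreeAvoiding, and_comm]

open Classical in
lemma coe_squarefreeAvoiding_primeFactors {h : Fq[X]} (hh : h ≠ 0) (n : ℕ) :
    (squarefreeAvoiding (primeFactors h) n : Set Fq[X]) =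
      {F | F.Monic ∧ Squarefree F ∧ F.natDegree = n ∧ IsCoprime F h} := by
  ext F
  simp only [Finset.mem_coe, mem_squarefreeAvoiding, Set.mem_ofPred_eq,
    isCoprime_iff_forall_primeFactors_not_dvd hh, and_left_comm]

/-! ### The recursion in the set of avoided primes -/

variable {S : Finset Fq[X]} {P : Fq[X]}

open Classical in
lemma filter_not_dvd_squarefreeAvoiding (n : ℕ) :
    {F ∈ squarefreeAvoiding S n | ¬ P ∣ F} = squarefreeAvoiding (insert P S) n := by
  ext F
  simp only [Finset.mem_filter, mem_squarefreeAvoiding, Finset.forall_mem_insert]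
  tauto

open Classical in
lemma mul_mem_squarefreeAvoiding_iff (hPS : P ∉ S) (hPm : P.Monic) (hP : Irreducible P)
    (hS : ∀ Q ∈ S, Q.Monic ∧ Irreducible Q) {n : ℕ} {G : Fq[X]} :
    P * G ∈ squarefreeAvoiding S (n + P.natDegree) ↔ G ∈ squarefreeAvoiding (insert P S) n := by
  have hQP {Q : Fq[X]} (hQ : Q ∈ S) : ¬ Q ∣ P := fun h ↦ hPS <|
    eq_of_monic_of_associated (hS Q hQ).1 hPm ((hS Q hQ).2.associated_of_dvd hP h) ▸ hQ
  have havoid : (∀ Q ∈ S, ¬ Q ∣ P * G) ↔ ∀ Q ∈ S, ¬ Q ∣ G := by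
    refine forall₂_congr fun Q hQ ↦ ?_
    rw [(hS Q hQ).2.prime.dvd_mul, not_or, and_iff_right (hQP hQ)]
  have hmonic : (P * G).Monic ↔ G.Monic := ⟨hPm.of_mul_monic_left, hPm.mul⟩
  rw [mem_squarefreeAvoiding, mem_squarefreeAvoiding, havoid, hmonic, squarefree_mul_iff,
    hP.isRelPrime_iff_not_dvd, and_iff_right hP.squarefree, Finset.forall_mem_insert]
  refine and_congr_right fun hG ↦ ?_
  rw [hPm.natDegree_mul hG, add_comm, Nat.add_right_cancel_iff]
  tauto

open Classical in
lemma card_squarefreeAvoiding_add (hPS : P ∉ S) (hPm : P.Monic) (hP : Irreducible P)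
    (hS : ∀ Q ∈ S, Q.Monic ∧ Irreducible Q) (n : ℕ) :
    (squarefreeAvoiding S (n + P.natDegree)).card =
      (squarefreeAvoiding (insert P S) (n + P.natDegree)).card +
        (squarefreeAvoiding (insert P S) n).card := by
  have himage : {F ∈ squarefreeAvoiding S (n + P.natDegree) | P ∣ F} =
      (squarefreeAvoiding (insert P S) n).image (P * ·) := by
    ext F
    simp only [Finset.mem_filter, Finset.mem_image,
      ← mul_mem_squarefreeAvoiding_iff hPS hPm hP hS]
    constructor
    · rintro ⟨hF, G, rfl⟩
      exact ⟨G, hF, rfl⟩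
    · rintro ⟨G, hG, rfl⟩
      exact ⟨hG, dvd_mul_right P G⟩
  rw [← Finset.card_filter_add_card_filter_not (P ∣ ·), himage, filter_not_dvd_squarefreeAvoiding,
    Finset.card_image_of_injective _ (mul_right_injective₀ hPm.ne_zero), add_comm]

open Classical in
lemma squarefreeAvoiding_insert_of_lt_natDegree {n : ℕ} (hn : n < P.natDegree) :
    squarefreeAvoiding (insert P S) n = squarefreeAvoiding S n := by
  rw [← filter_not_dvd_squarefreeAvoiding, Finset.filter_eq_self]
  intro F hF hPF
  obtain ⟨hFm, rfl, -⟩ := mem_squarefreeAvoiding.1 hF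
  exact hn.not_ge (natDegree_le_of_dvd hPF hFm.ne_zero)

/-! ### Counting all square-free polynomials -/

lemma card_pow_eq_sum_card_squarefreeAvoiding_empty (n : ℕ) :
    Fintype.card Fq ^ n = ∑ k ∈ Finset.range (n / 2 + 1),
      Fintype.card Fq ^ k * (squarefreeAvoiding (∅ : Finset Fq[X]) (n - 2 * k)).card := by
  simp_rw [← card_monics, ← Finset.card_product]
  rw [← Finset.card_sigma]
  symm
  refine Finset.card_bij (fun x _ ↦ x.2.1 ^ 2 * x.2.2) ?_ ?_ ?_
  · rintro ⟨k, A, B⟩ hx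
    simp only [Finset.mem_sigma, Finset.mem_range, Finset.mem_product, mem_monics,
      mem_squarefreeAvoiding] at hx ⊢
    obtain ⟨hk, ⟨hA, rfl⟩, hB, hBdeg, -⟩ := hx
    refine ⟨(hA.pow 2).mul hB, ?_⟩
    rw [(hA.pow 2).natDegree_mul hB, hA.natDegree_pow]
    lia
  · rintro ⟨k, A, B⟩ hx ⟨k', A', B'⟩ hx' hxx'
    simp only [Finset.mem_sigma, Finset.mem_product, mem_monics, mem_squarefreeAvoiding] at hx hx'
    obtain ⟨-, ⟨hA, rfl⟩, -, -, hB, -⟩ := hx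
    obtain ⟨-, ⟨hA', rfl⟩, -, -, hB', -⟩ := hx'
    obtain ⟨rfl, rfl⟩ := sq_mul_squarefree_inj hA hA' hB hB' hxx'
    rfl
  · intro F hF
    obtain ⟨hFm, rfl⟩ := mem_monics.1 hF
    obtain ⟨A, B, hA, hB, hBsq, rfl⟩ := exists_monic_sq_mul_squarefree hFm
    refine ⟨⟨A.natDegree, A, B⟩, ?_, rfl⟩
    simp only [Finset.mem_sigma, Finset.mem_range, Finset.mem_product, mem_monics,
      mem_squarefreeAvoiding, (hA.pow 2).natDegree_mul hB, hA.natDegree_pow]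
    exact ⟨by lia, ⟨hA, trivial⟩, hB, by lia, hBsq, by simp⟩

lemma card_squarefreeAvoiding_empty_of_le_one {n : ℕ} (hn : n ≤ 1) :
    (squarefreeAvoiding (∅ : Finset Fq[X]) n).card = Fintype.card Fq ^ n := by
  have hhalf : n / 2 = 0 := by lia
  rw [card_pow_eq_sum_card_squarefreeAvoiding_empty, hhalf]
  simp

lemma card_squarefreeAvoiding_empty_add_two (n : ℕ) :
    (squarefreeAvoiding (∅ : Finset Fq[X]) (n + 2)).card + Fintype.card Fq ^ (n + 1) =
      Fintype.card Fq ^ (n + 2) := by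
  have hhalf : (n + 2) / 2 = n / 2 + 1 := by lia
  have hsub (k : ℕ) : n + 2 - 2 * (k + 1) = n - 2 * k := by lia
  rw [card_pow_eq_sum_card_squarefreeAvoiding_empty (n + 2), hhalf, Finset.sum_range_succ',
    pow_succ', card_pow_eq_sum_card_squarefreeAvoiding_empty n, Finset.mul_sum, add_comm]
  simp only [hsub, pow_succ', mul_assoc, pow_zero, one_mul, mul_zero, Nat.sub_zero]

end Counting

section MainTerm

variable {Fq : Type*} [Field Fq] [Fintype Fq] {S : Finset Fq[X]} {P : Fq[X]}

/-- The asymptotic proportion `∏_{P ∈ S} (1 + |P|⁻¹)⁻¹` of square-free polynomials that are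
divisible by no prime `P ∈ S`. -/
noncomputable def density (S : Finset Fq[X]) : ℝ :=
  ∏ P ∈ S, (1 + ((Fintype.card Fq : ℝ) ^ P.natDegree)⁻¹)⁻¹

/-- The main term `M(S, m)` in the asymptotics of the cardinality of `squarefreeAvoiding S m`. -/
noncomputable def mainTerm (S : Finset Fq[X]) (m : ℕ) : ℝ :=
  (1 - (Fintype.card Fq : ℝ)⁻¹) * (Fintype.card Fq : ℝ) ^ m * density S

lemma density_nonneg : 0 ≤ density S :=
  Finset.prod_nonneg fun _ _ ↦ by positivity

lemma density_le_one : density S ≤ 1 :=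
  Finset.prod_le_one (fun _ _ ↦ by positivity) fun _ _ ↦
    inv_le_one_of_one_le₀ (le_add_of_nonneg_right (by positivity))

lemma mainTerm_nonneg (m : ℕ) : 0 ≤ mainTerm S m := by
  have hq : (1 : ℝ) ≤ Fintype.card Fq := Nat.one_le_cast.2 Fintype.card_pos
  have : 0 ≤ 1 - (Fintype.card Fq : ℝ)⁻¹ := sub_nonneg.2 (inv_le_one_of_one_le₀ hq)
  have := density_nonneg (S := S)
  unfold mainTerm
  positivity

lemma mainTerm_le_pow (m : ℕ) : mainTerm S m ≤ (Fintype.card Fq : ℝ) ^ m := by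
  have : 1 - (Fintype.card Fq : ℝ)⁻¹ ≤ 1 := sub_le_self _ (by positivity)
  calc mainTerm S m ≤ 1 * (Fintype.card Fq : ℝ) ^ m * 1 := by
        unfold mainTerm
        gcongr
        exacts [density_nonneg, density_le_one]
    _ = (Fintype.card Fq : ℝ) ^ m := by ring

lemma mainTerm_eq_mainTerm_empty_mul_density (m : ℕ) :
    mainTerm S m = mainTerm (∅ : Finset Fq[X]) m * density S := by
  simp [mainTerm, density]

lemma mainTerm_add (m n : ℕ) : mainTerm S (m + n) = mainTerm S m * (Fintype.card Fq : ℝ) ^ n := by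
  unfold mainTerm
  ring

open Classical in
lemma mainTerm_insert (hPS : P ∉ S) (m : ℕ) :
    mainTerm (insert P S) m * (1 + ((Fintype.card Fq : ℝ) ^ P.natDegree)⁻¹) = mainTerm S m := by
  have : 1 + ((Fintype.card Fq : ℝ) ^ P.natDegree)⁻¹ ≠ 0 := by positivity
  rw [mainTerm, mainTerm, density, density, Finset.prod_insert hPS]
  field_simp

open Classical in
lemma mainTerm_insert_add (hPS : P ∉ S) (m : ℕ) :
    mainTerm S (m + P.natDegree) =
      mainTerm (insert P S) (m + P.natDegree) + mainTerm (insert P S) m := by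
  rw [← mainTerm_insert hPS, mainTerm_add, mul_one_add, mul_inv_cancel_right₀ (by positivity)]

lemma mainTerm_empty_add_two (n : ℕ) :
    mainTerm (∅ : Finset Fq[X]) (n + 2) = (squarefreeAvoiding (∅ : Finset Fq[X]) (n + 2)).card := by
  have hcount : ((squarefreeAvoiding (∅ : Finset Fq[X]) (n + 2)).card : ℝ) +
      (Fintype.card Fq : ℝ) ^ (n + 1) = (Fintype.card Fq : ℝ) ^ (n + 2) :=
    mod_cast card_squarefreeAvoiding_empty_add_two n
  rw [eq_sub_of_add_eq hcount, mainTerm, density, Finset.prod_empty]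
  field_simp
  ring

lemma card_squarefreeAvoiding_empty_mem_Icc (m : ℕ) :
    ((squarefreeAvoiding (∅ : Finset Fq[X]) m).card : ℝ) ∈
      Set.Icc (mainTerm (∅ : Finset Fq[X]) m) (mainTerm (∅ : Finset Fq[X]) m + 1) := by
  have hq : (1 : ℝ) ≤ Fintype.card Fq := Nat.one_le_cast.2 Fintype.card_pos
  match m with
  | 0 =>
    have := inv_le_one_of_one_le₀ hq
    have : 0 ≤ (Fintype.card Fq : ℝ)⁻¹ := by positivity
    simp only [card_squarefreeAvoiding_empty_of_le_one zero_le_one, mainTerm, density,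
      Finset.prod_empty, pow_zero, Nat.cast_one, mul_one, Set.mem_Icc]
    constructor <;> linarith
  | 1 =>
    have : (1 - (Fintype.card Fq : ℝ)⁻¹) * Fintype.card Fq = Fintype.card Fq - 1 := by
      field_simp
    simp [card_squarefreeAvoiding_empty_of_le_one le_rfl, mainTerm, density, this]
  | n + 2 => simp [mainTerm_empty_add_two]

lemma pow_le_two_mul_card_squarefreeAvoiding_empty (m : ℕ) :
    (Fintype.card Fq : ℝ) ^ m ≤ 2 * (squarefreeAvoiding (∅ : Finset Fq[X]) m).card := by
  have hq : (2 : ℝ) ≤ Fintype.card Fq := mod_cast Fintype.one_lt_card (α := Fq)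
  have hhalf : 1 / 2 ≤ 1 - (Fintype.card Fq : ℝ)⁻¹ := by
    linarith [inv_anti₀ two_pos hq]
  calc (Fintype.card Fq : ℝ) ^ m = 2 * (1 / 2 * (Fintype.card Fq : ℝ) ^ m) := by ring
    _ ≤ 2 * ((1 - (Fintype.card Fq : ℝ)⁻¹) * (Fintype.card Fq : ℝ) ^ m) := by gcongr
    _ = 2 * mainTerm (∅ : Finset Fq[X]) m := by simp [mainTerm, density]
    _ ≤ 2 * (squarefreeAvoiding (∅ : Finset Fq[X]) m).card := by
      gcongr
      exact (card_squarefreeAvoiding_empty_mem_Icc m).1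

end MainTerm

section ErrorTerm

lemma sqrt_pow_sq {x : ℝ} (hx : 0 ≤ x) (n : ℕ) : (√x ^ n) ^ 2 = x ^ n := by
  rw [pow_right_comm, Real.sq_sqrt hx]

lemma abs_le_mul_pow_of_add_shift {e e' : ℕ → ℝ} {r K K' : ℝ} {d : ℕ} (hr : 0 < r) (hd : 0 < d)
    (hK : K + K' * (r ^ d)⁻¹ ≤ K') (hadd : ∀ n, e (n + d) = e' (n + d) + e' n)
    (he : ∀ n, |e n| ≤ K * r ^ n) (hinit : ∀ n < d, |e' n| ≤ K' * r ^ n) (n : ℕ) :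
    |e' n| ≤ K' * r ^ n := by
  induction n using Nat.strong_induction_on with
  | _ n ih =>
    obtain hn | hn := lt_or_ge n d
    · exact hinit n hn
    · obtain ⟨m, rfl⟩ := Nat.exists_eq_add_of_le' hn
      calc |e' (m + d)| = |e (m + d) - e' m| := by rw [hadd, add_sub_cancel_right]
        _ ≤ |e (m + d)| + |e' m| := abs_sub _ _
        _ ≤ K * r ^ (m + d) + K' * r ^ m := add_le_add (he _) (ih m (by lia))
        _ = (K + K' * (r ^ d)⁻¹) * r ^ (m + d) := by
          rw [pow_add]
          field_simp
        _ ≤ K' * r ^ (m + d) := by gcongr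

variable {Fq : Type*} [Field Fq] [Fintype Fq] {S : Finset Fq[X]} {P : Fq[X]}

variable (Fq) in
lemma one_lt_sqrt_card : 1 < √(Fintype.card Fq : ℝ) :=
  Real.lt_sqrt_of_sq_lt (by rw [one_pow]; exact Nat.one_lt_cast.2 Fintype.one_lt_card)

/-- The constant `∏_{P ∈ S} (1 - |P| ^ (-1/2))⁻¹` by which the error in counting square-free
polynomials grows when the primes in `S` are removed. -/
noncomputable def errorFactor (S : Finset Fq[X]) : ℝ :=
  ∏ P ∈ S, (1 - (√(Fintype.card Fq : ℝ) ^ P.natDegree)⁻¹)⁻¹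

lemma inv_sqrt_card_pow_lt_one (hP : Irreducible P) :
    (√(Fintype.card Fq : ℝ) ^ P.natDegree)⁻¹ < 1 :=
  inv_lt_one_of_one_lt₀ (one_lt_pow₀ (one_lt_sqrt_card Fq) hP.natDegree_pos.ne')

lemma one_le_errorFactor (hS : ∀ Q ∈ S, Irreducible Q) : 1 ≤ errorFactor S := by
  refine Finset.one_le_prod fun Q hQ ↦ one_le_inv_iff₀.2 ?_
  exact ⟨sub_pos.2 (inv_sqrt_card_pow_lt_one (hS Q hQ)), sub_le_self _ (by positivity)⟩

open Classical in
lemma errorFactor_insert (hPS : P ∉ S) (hP : Irreducible P) :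
    errorFactor S + errorFactor (insert P S) * (√(Fintype.card Fq : ℝ) ^ P.natDegree)⁻¹ =
      errorFactor (insert P S) := by
  have hne := (sub_pos.2 (inv_sqrt_card_pow_lt_one hP)).ne'
  rw [errorFactor, errorFactor, Finset.prod_insert hPS]
  generalize (√(Fintype.card Fq : ℝ) ^ P.natDegree)⁻¹ = x at *
  field_simp
  ring

open Classical in
lemma abs_mainTerm_sub_mainTerm_insert_le (hPS : P ∉ S) {m : ℕ} (hm : m ≤ P.natDegree) :
    |mainTerm S m - mainTerm (insert P S) m| ≤
      (√(Fintype.card Fq : ℝ) ^ P.natDegree)⁻¹ * √(Fintype.card Fq : ℝ) ^ m := by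
  have hratio : (√(Fintype.card Fq : ℝ) ^ P.natDegree)⁻¹ * √(Fintype.card Fq : ℝ) ^ m ≤ 1 := by
    rw [inv_mul_le_one₀ (pow_pos (zero_lt_one.trans (one_lt_sqrt_card Fq)) _)]
    exact pow_le_pow_right₀ (one_lt_sqrt_card Fq).le hm
  have hsub : mainTerm S m - mainTerm (insert P S) m =
      mainTerm (insert P S) m * ((Fintype.card Fq : ℝ) ^ P.natDegree)⁻¹ := by
    rw [← mainTerm_insert hPS]
    ring
  rw [hsub, abs_of_nonneg (mul_nonneg (mainTerm_nonneg m) (by positivity))]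
  calc mainTerm (insert P S) m * ((Fintype.card Fq : ℝ) ^ P.natDegree)⁻¹
      ≤ (Fintype.card Fq : ℝ) ^ m * ((Fintype.card Fq : ℝ) ^ P.natDegree)⁻¹ := by
        gcongr
        exact mainTerm_le_pow m
    _ = ((√(Fintype.card Fq : ℝ) ^ P.natDegree)⁻¹ * √(Fintype.card Fq : ℝ) ^ m) ^ 2 := by
        rw [← sqrt_pow_sq (Nat.cast_nonneg _) m, ← sqrt_pow_sq (Nat.cast_nonneg _) P.natDegree]
        ring
    _ ≤ (√(Fintype.card Fq : ℝ) ^ P.natDegree)⁻¹ * √(Fintype.card Fq : ℝ) ^ m :=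
        pow_le_of_le_one (by positivity) hratio two_ne_zero

theorem abs_card_squarefreeAvoiding_sub_mainTerm_le (hS : ∀ Q ∈ S, Q.Monic ∧ Irreducible Q)
    (m : ℕ) :
    |((squarefreeAvoiding S m).card : ℝ) - mainTerm S m| ≤
      errorFactor S * √(Fintype.card Fq : ℝ) ^ m := by
  classical
  have hr := one_lt_sqrt_card Fq
  induction S using Finset.induction_on generalizing m with
  | empty =>
    obtain ⟨hlower, hupper⟩ := card_squarefreeAvoiding_empty_mem_Icc (Fq := Fq) m
    rw [errorFactor, Finset.prod_empty, one_mul, abs_of_nonneg (sub_nonneg.2 hlower)]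
    exact (sub_le_iff_le_add'.2 hupper).trans (one_le_pow₀ hr.le)
  | insert P S hPS ih =>
    obtain ⟨⟨hPm, hP⟩, hS⟩ := (Finset.forall_mem_insert ..).1 hS
    refine abs_le_mul_pow_of_add_shift
      (e := fun n ↦ ((squarefreeAvoiding S n).card : ℝ) - mainTerm S n)
      (e' := fun n ↦ ((squarefreeAvoiding (insert P S) n).card : ℝ) - mainTerm (insert P S) n)
      (zero_lt_one.trans hr) hP.natDegree_pos (errorFactor_insert hPS hP).le (fun n ↦ ?_) (ih hS)
      (fun n hn ↦ ?_) m
    · rw [card_squarefreeAvoiding_add hPS hPm hP hS, mainTerm_insert_add hPS, Nat.cast_add]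
      ring
    · have hone : 1 ≤ errorFactor (insert P S) := one_le_errorFactor
        ((Finset.forall_mem_insert ..).2 ⟨hP, fun Q hQ ↦ (hS Q hQ).2⟩)
      rw [squarefreeAvoiding_insert_of_lt_natDegree hn, ← errorFactor_insert hPS hP, add_mul]
      refine (abs_sub_le _ (mainTerm S n) _).trans (add_le_add (ih hS n) ?_)
      refine (abs_mainTerm_sub_mainTerm_insert_le hPS hn.le).trans ?_
      gcongr
      exact le_mul_of_one_le_left (by positivity) hone

/-! ### Bounding the error factor -/

lemma card_filter_card_pow_natDegree_lt_four_le (hS : ∀ Q ∈ S, Q.Monic ∧ Irreducible Q) :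
    {P ∈ S | Fintype.card Fq ^ P.natDegree < 4}.card ≤ 3 := by
  obtain hempty | ⟨P, hP⟩ := {P ∈ S | Fintype.card Fq ^ P.natDegree < 4}.eq_empty_or_nonempty
  · simp [hempty]
  have hq2 : 2 ≤ Fintype.card Fq := Fintype.one_lt_card
  have hq3 : Fintype.card Fq ≤ 3 := by
    obtain ⟨hPS, hP4⟩ := Finset.mem_filter.1 hP
    exact Nat.le_of_lt_succ <| (Nat.le_self_pow (hS P hPS).2.natDegree_pos.ne' _).trans_lt hP4
  have hlinear : {P ∈ S | Fintype.card Fq ^ P.natDegree < 4} ⊆ monics Fq 1 := by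
    intro Q hQ
    obtain ⟨hQS, hQ4⟩ := Finset.mem_filter.1 hQ
    refine mem_monics.2 ⟨(hS Q hQS).1, le_antisymm ?_ (hS Q hQS).2.natDegree_pos⟩
    by_contra! hdeg
    exact hQ4.not_ge <| (Nat.pow_le_pow_left hq2 2).trans
      (Nat.pow_le_pow_right (by lia) hdeg)
  calc _ ≤ (monics Fq 1).card := Finset.card_le_card hlinear
    _ ≤ 3 := by rwa [card_monics, pow_one]

lemma inv_one_sub_inv_le_inv_one_sub_inv {a x : ℝ} (ha : 1 < a) (hax : a ≤ x) :
    (1 - x⁻¹)⁻¹ ≤ (1 - a⁻¹)⁻¹ := by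
  have : 0 < 1 - a⁻¹ := sub_pos.2 (inv_lt_one_of_one_lt₀ ha)
  gcongr

lemma inv_one_sub_inv_sqrt_card_pow_le (hP : Irreducible P) :
    (1 - (√(Fintype.card Fq : ℝ) ^ P.natDegree)⁻¹)⁻¹ ≤
      (if Fintype.card Fq ^ P.natDegree < 4 then 2 else 1) * 2 := by
  have hle_sqrt {a : ℝ} (ha : a ^ 2 ≤ (Fintype.card Fq : ℝ) ^ P.natDegree) :
      a ≤ √(Fintype.card Fq : ℝ) ^ P.natDegree := by
    rw [← sqrt_pow_sq (Nat.cast_nonneg _)] at ha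
    exact le_of_abs_le (abs_le_of_sq_le_sq ha (by positivity))
  split_ifs with hlt
  · have htwo : 2 ≤ Fintype.card Fq ^ P.natDegree :=
      (Fintype.one_lt_card (α := Fq)).trans_le (Nat.le_self_pow hP.natDegree_pos.ne' _)
    have hge : (4 / 3 : ℝ) ≤ √(Fintype.card Fq : ℝ) ^ P.natDegree := by
      refine hle_sqrt (le_trans ?_ (mod_cast htwo : (2 : ℝ) ≤ _))
      norm_num
    refine (inv_one_sub_inv_le_inv_one_sub_inv (by norm_num) hge).trans ?_
    norm_num
  · have hge : (2 : ℝ) ≤ √(Fintype.card Fq : ℝ) ^ P.natDegree := by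
      refine hle_sqrt (le_trans ?_ (mod_cast not_lt.1 hlt : (4 : ℝ) ≤ _))
      norm_num
    refine (inv_one_sub_inv_le_inv_one_sub_inv (by norm_num) hge).trans ?_
    norm_num

lemma errorFactor_le (hS : ∀ Q ∈ S, Q.Monic ∧ Irreducible Q) :
    errorFactor S ≤ 8 * 2 ^ S.card := by
  calc errorFactor S
      ≤ ∏ P ∈ S, (if Fintype.card Fq ^ P.natDegree < 4 then (2 : ℝ) else 1) * 2 := by
        refine Finset.prod_le_prod (fun P hP ↦ ?_)
          fun P hP ↦ inv_one_sub_inv_sqrt_card_pow_le (hS P hP).2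
        exact inv_nonneg.2 (sub_nonneg.2 (inv_sqrt_card_pow_lt_one (hS P hP).2).le)
    _ = 2 ^ {P ∈ S | Fintype.card Fq ^ P.natDegree < 4}.card * 2 ^ S.card := by
        rw [Finset.prod_mul_distrib, Finset.prod_const, ← Finset.prod_filter, Finset.prod_const]
    _ ≤ 2 ^ 3 * 2 ^ S.card := by
        gcongr
        exacts [one_le_two, card_filter_card_pow_natDegree_lt_four_le hS]
    _ = 8 * 2 ^ S.card := by norm_num

/-! ### The proportion of square-free polynomials avoiding `S` -/

lemma abs_card_squarefreeAvoiding_sub_card_mul_density_le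
    (hS : ∀ Q ∈ S, Q.Monic ∧ Irreducible Q) (d : ℕ) :
    |((squarefreeAvoiding S d).card : ℝ) -
        (squarefreeAvoiding (∅ : Finset Fq[X]) d).card * density S| ≤
      9 * 2 ^ S.card * √(Fintype.card Fq : ℝ) ^ d := by
  have hempty : |mainTerm S d - (squarefreeAvoiding (∅ : Finset Fq[X]) d).card * density S| ≤
      √(Fintype.card Fq : ℝ) ^ d := by
    have herr := abs_card_squarefreeAvoiding_sub_mainTerm_le (S := (∅ : Finset Fq[X])) (by simp) d
    rw [errorFactor, Finset.prod_empty, one_mul, abs_sub_comm] at herr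
    rw [mainTerm_eq_mainTerm_empty_mul_density, ← sub_mul, abs_mul, abs_of_nonneg density_nonneg]
    exact (mul_le_of_le_one_right (abs_nonneg _) density_le_one).trans herr
  calc _ ≤ errorFactor S * √(Fintype.card Fq : ℝ) ^ d + √(Fintype.card Fq : ℝ) ^ d :=
        (abs_sub_le _ (mainTerm S d) _).trans
          (add_le_add (abs_card_squarefreeAvoiding_sub_mainTerm_le hS d) hempty)
    _ ≤ 8 * 2 ^ S.card * √(Fintype.card Fq : ℝ) ^ d +
          2 ^ S.card * √(Fintype.card Fq : ℝ) ^ d := by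
        gcongr
        · exact errorFactor_le hS
        · exact le_mul_of_one_le_left (by positivity) (one_le_pow₀ one_le_two)
    _ = 9 * 2 ^ S.card * √(Fintype.card Fq : ℝ) ^ d := by ring

theorem abs_card_squarefreeAvoiding_div_card_sub_density_le
    (hS : ∀ Q ∈ S, Q.Monic ∧ Irreducible Q) (d : ℕ) :
    |((squarefreeAvoiding (∅ : Finset Fq[X]) d).card : ℝ)⁻¹ * (squarefreeAvoiding S d).card -
        density S| ≤
      18 * (Fintype.card Fq : ℝ) ^ (-(d : ℝ) / 2) * 2 ^ S.card := by
  have hr : 0 < √(Fintype.card Fq : ℝ) := zero_lt_one.trans (one_lt_sqrt_card Fq)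
  have hrpow : (Fintype.card Fq : ℝ) ^ (-(d : ℝ) / 2) = (√(Fintype.card Fq : ℝ) ^ d)⁻¹ := by
    rw [neg_div, Real.rpow_neg (Nat.cast_nonneg _), Real.rpow_div_two_eq_sqrt _ (Nat.cast_nonneg _),
      Real.rpow_natCast]
  have hle : (√(Fintype.card Fq : ℝ) ^ d) ^ 2 ≤
      2 * (squarefreeAvoiding (∅ : Finset Fq[X]) d).card :=
    (sqrt_pow_sq (Nat.cast_nonneg _) d).trans_le (pow_le_two_mul_card_squarefreeAvoiding_empty d)
  have hbound := abs_card_squarefreeAvoiding_sub_card_mul_density_le hS d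
  have hrd : 0 < √(Fintype.card Fq : ℝ) ^ d := pow_pos hr d
  rw [hrpow]
  generalize √(Fintype.card Fq : ℝ) ^ d = R at *
  generalize ((squarefreeAvoiding (∅ : Finset Fq[X]) d).card : ℝ) = N at *
  have hN : 0 < N := by linarith [pow_pos hrd 2]
  calc _ = N⁻¹ * |(squarefreeAvoiding S d).card - N * density S| := by
        rw [← abs_of_pos (inv_pos.2 hN), ← abs_mul, abs_of_pos (inv_pos.2 hN), mul_sub,
          inv_mul_cancel_left₀ hN.ne']
    _ ≤ 2 * (R ^ 2)⁻¹ * (9 * 2 ^ S.card * R) := by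
        gcongr
        rw [← div_eq_mul_inv, inv_le_comm₀ hN (by positivity), inv_div]
        linarith
    _ = 18 * R⁻¹ * 2 ^ S.card := by
        field_simp
        norm_num

end ErrorTerm

end CoprimeCount

open CoprimeCount UniqueFactorizationMonoid in
theorem coprime_count_mean_general {Fq : Type*} [Field Fq] [Fintype Fq] (d : ℕ) {h : Fq[X]}
    (hh : h ≠ 0) :
    |({F : Fq[X] | F.Monic ∧ Squarefree F ∧ F.natDegree = d}.ncard : ℝ)⁻¹ *
          ({F : Fq[X] | F.Monic ∧ Squarefree F ∧ F.natDegree = d ∧ IsCoprime F h}.ncard : ℝ)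
        - ∏ᶠ P ∈ {P : Fq[X] | P.Monic ∧ Irreducible P ∧ P ∣ h},
            (1 + ((Fintype.card Fq : ℝ) ^ P.natDegree)⁻¹)⁻¹|
      ≤ 18 * (Fintype.card Fq : ℝ) ^ (-(d : ℝ) / 2) *
          ({D : Fq[X] | D.Monic ∧ D ∣ h}.ncard : ℝ) := by
  classical
  have hprimes (P : Fq[X]) (hP : P ∈ primeFactors h) : P.Monic ∧ Irreducible P :=
    ((coe_primeFactors hh).subset hP).imp_right And.left
  rw [← coe_squarefreeAvoiding_empty, ← coe_squarefreeAvoiding_primeFactors hh,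
    ← coe_primeFactors hh, finprod_mem_coe_finset, Set.ncard_coe_finset, Set.ncard_coe_finset]
  refine (abs_card_squarefreeAvoiding_div_card_sub_density_le hprimes d).trans ?_
  gcongr
  exact_mod_cast two_pow_card_primeFactors_le_ncard hh

/-- There is an absolute constant `C > 0` such that for every odd prime power `q`
(realized as the cardinality of a finite field `Fq`), every integer `d ≥ 3`, and every
monic square-free polynomial `h ∈ Fq[X]`, one has
`|(1/#H_{d,q}) · #{F ∈ H_{d,q} : gcd(F,h) = 1} - ∏_{P ∣ h} (1 + |P|⁻¹)⁻¹| ≤ C q^(-d/2) σ(h)`,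
where the product runs over the monic irreducible polynomials `P` dividing `h`,
`|P| = q^(deg P)`, and `σ(h)` is the number of monic divisors of `h`. -/
theorem coprime_count_mean :
    ∃ C : ℝ, 0 < C ∧
      ∀ (Fq : Type) [Field Fq] [Fintype Fq], Odd (Fintype.card Fq) →
        ∀ d : ℕ, 3 ≤ d → ∀ h : Polynomial Fq, h.Monic → Squarefree h →
          |(({F : Polynomial Fq | F.Monic ∧ Squarefree F ∧ F.natDegree = d}.ncard : ℝ))⁻¹ *
                ({F : Polynomial Fq |
                    F.Monic ∧ Squarefree F ∧ F.natDegree = d ∧ IsCoprime F h}.ncard : ℝ)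
              - ∏ᶠ P ∈ {P : Polynomial Fq | P.Monic ∧ Irreducible P ∧ P ∣ h},
                  (1 + ((Fintype.card Fq : ℝ) ^ P.natDegree)⁻¹)⁻¹|
            ≤ C * (Fintype.card Fq : ℝ) ^ (-(d : ℝ) / 2) *
                ({D : Polynomial Fq | D.Monic ∧ D ∣ h}.ncard : ℝ) :=
  ⟨18, by norm_num, fun _ _ _ _ d _ _ hh _ ↦ coprime_count_mean_general d hh.ne_zero⟩
end

section
/- For every prime power q and every positive integer s, one has H(s) = ∑_{r=1}^{s} (s!/(2^r r!)) · ∑_{λ_1+⋯+λ_r=s, λ_i ≥ 1} ∑_{P_1, …, P_r distinct} ∏_{i=1}^{r} (u_{P_i}^{λ_i} + (−1)^{λ_i} v_{P_i}^{λ_i}) / (λ_i! · (1 + |P_i|^{−1})), where the middle sum is over all r-tuples of positive integers λ_1, …, λ_r with λ_1 + ⋯ + λ_r = s and the inner sum is over all r-tuples of pairwise distinct monic irreducible polynomials P_1, …, P_r ∈ 𝔽_q[X] (all series involved have nonnegative terms and converge). -/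
/-!
The von Mangoldt factors force `f i = Q i ^ k i` with `Q i` prime and `k i ≥ 1`. Writing `Q = P ∘ φ`
with `P` injective and `φ : Fin s → Fin r` surjective, which can be done in `r!` ways when `Q` takes
`r` values, replaces the sum over `Q` by `1 / r!` times a sum over `P` and `φ`. The product of the
`f i` is a square if and only if the exponents attached to each `P j` have an even sum, so for fixed
`P` and `φ` the sum over `k` splits into a product over `j`.

If `n` is the size of the fibre of `j` and `x = |P j|⁻¹`, its factor is the sum of
`∏ i, x ^ k i / k i` over `n`-tuples of positive integers with even sum. Averaging the `n`-th powers
of the logarithmic series at `x` and `-x` detects the parity and gives `(u ^ n + (-v) ^ n) / 2`. The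
surjections with fibre sizes `λ` are counted by a multinomial coefficient, whence `s! / ∏ j, λ j!`.

All terms are nonnegative, so the rearrangements can be carried out in `ℝ≥0∞`. Return to `ℝ` is
possible because `u ^ n + (-v) ^ n = O(|P|⁻²)`, which for `n = 1` relies on the cancellation of `u`
against `v`, while `∑ |f|⁻²` over monic `f`, grouped by degree, is a convergent geometric
series.
-/

open Polynomial

open Classical in
/-- The function-field von Mangoldt function: `Λ(f) = deg P` if `f = P^k` is a positive
power of a monic irreducible polynomial `P`, and `Λ(f) = 0` otherwise. -/
noncomputable def vonMangoldt {Fq : Type} [Field Fq] (f : Polynomial Fq) : ℝ :=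
  if h : ∃ P : Polynomial Fq, ∃ k : ℕ, P.Monic ∧ Irreducible P ∧ 1 ≤ k ∧ f = P ^ k
  then (h.choose.natDegree : ℝ)
  else 0

/-- `H(s)`: the sum of `(∏ i, Λ(f i) q^(-deg f i) / deg (f i)) · ∏_{P ∣ f 1 ⋯ f s} (1+|P|⁻¹)⁻¹`
over all `s`-tuples of monic polynomials of positive degree in `Fq[X]` whose product is a
square, where the inner product runs over monic irreducible polynomials dividing the
product and `|P| = q^(deg P)`. -/
noncomputable def Hfun (Fq : Type) [Field Fq] [Fintype Fq] (s : ℕ) : ℝ :=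
  ∑' f : {f : Fin s → Polynomial Fq //
      (∀ i, (f i).Monic ∧ 0 < (f i).natDegree) ∧ IsSquare (∏ i, f i)},
    (∏ i, vonMangoldt (f.1 i) * ((Fintype.card Fq : ℝ) ^ (f.1 i).natDegree)⁻¹ /
        ((f.1 i).natDegree : ℝ)) *
      ∏ᶠ P ∈ {P : Polynomial Fq | P.Monic ∧ Irreducible P ∧ P ∣ ∏ i, f.1 i},
        (1 + ((Fintype.card Fq : ℝ) ^ P.natDegree)⁻¹)⁻¹

/-- `u_P = -log(1 - |P|⁻¹)` where `|P| = q^(deg P)`. -/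
noncomputable def uP {Fq : Type} [Field Fq] [Fintype Fq] (P : Polynomial Fq) : ℝ :=
  -Real.log (1 - ((Fintype.card Fq : ℝ) ^ P.natDegree)⁻¹)

/-- `v_P = log(1 + |P|⁻¹)` where `|P| = q^(deg P)`. -/
noncomputable def vP {Fq : Type} [Field Fq] [Fintype Fq] (P : Polynomial Fq) : ℝ :=
  Real.log (1 + ((Fintype.card Fq : ℝ) ^ P.natDegree)⁻¹)

open scoped ENNReal

section ProductsOfSeries

variable {ι R : Type*} [Fintype ι] [NormedCommRing R]

theorem summable_norm_prod_pi {β : ι → Type*} {f : ∀ i, β i → R}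
    (hf : ∀ i, Summable fun x => ‖f i x‖) :
    Summable fun x : ∀ i, β i => ‖∏ i, f i (x i)‖ := by
  have induct := Fintype.induction_empty_option (P := fun ι _ => ∀ (β : ι → Type _)
    (f : ∀ i, β i → R), (∀ i, Summable fun x => ‖f i x‖) →
      Summable fun x : ∀ i, β i => ‖∏ i, f i (x i)‖)
  refine induct (fun α γ _ e ih β f hf => ?_) (fun β f _ => ?_) (fun α _ ih β f hf => ?_) ι β f hf
  · let _ : Fintype α := Fintype.ofEquiv γ e.symm
    rw [← (Equiv.piCongrLeft β e).summable_iff]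
    refine (ih _ _ fun i => hf (e i)).congr fun x => ?_
    simp [← e.prod_comp, Equiv.piCongrLeft_apply_apply]
  · exact Summable.of_finite
  · rw [← Equiv.piOptionEquivProd.symm.summable_iff]
    refine ((hf none).mul_norm (ih _ _ fun i => hf (some i))).congr fun x => ?_
    simp [Fintype.prod_option, Equiv.piOptionEquivProd]

theorem tsum_prod_pi [CompleteSpace R] {β : ι → Type*} {f : ∀ i, β i → R}
    (hf : ∀ i, Summable fun x => ‖f i x‖) :
    ∑' x : ∀ i, β i, ∏ i, f i (x i) = ∏ i, ∑' x, f i x := by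
  refine Fintype.induction_empty_option (P := fun ι _ => ∀ (β : ι → Type _) (f : ∀ i, β i → R),
    (∀ i, Summable fun x => ‖f i x‖) → ∑' x : ∀ i, β i, ∏ i, f i (x i) = ∏ i, ∑' x, f i x)
    (fun α γ _ e ih β f hf => ?_) (fun _ _ _ => by simp) (fun α _ ih β f hf => ?_) ι β f hf
  · let _ : Fintype α := Fintype.ofEquiv γ e.symm
    rw [← (Equiv.piCongrLeft β e).tsum_eq, ← e.prod_comp, ← ih _ _ fun i => hf (e i)]
    simp [← e.prod_comp, Equiv.piCongrLeft_apply_apply]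
  · rw [← Equiv.piOptionEquivProd.symm.tsum_eq, Fintype.prod_option,
      ← ih _ _ fun i => hf (some i), tsum_mul_tsum_of_summable_norm (hf none)
        (summable_norm_prod_pi fun i => hf (some i))]
    simp [Fintype.prod_option, Equiv.piOptionEquivProd]

theorem hasSum_prod_pi [CompleteSpace R] {β : ι → Type*} {f : ∀ i, β i → R}
    (hf : ∀ i, Summable fun x => ‖f i x‖) :
    HasSum (fun x : ∀ i, β i => ∏ i, f i (x i)) (∏ i, ∑' x, f i x) :=
  tsum_prod_pi hf ▸ (summable_norm_prod_pi hf).of_norm.hasSum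

theorem hasSum_prod_fiber [CompleteSpace R] {κ β : Type*} (φ : κ → ι)
    {F : ∀ j, ({i // φ i = j} → β) → R} (hF : ∀ j, Summable fun x => ‖F j x‖) :
    HasSum (fun k : κ → β => ∏ j, F j fun i => k i) (∏ j, ∑' x, F j x) :=
  (Equiv.piCongrFiberwise (f := φ) (γ₁ := fun _ => β) fun _ => Equiv.refl _).hasSum_iff.2
    (hasSum_prod_pi hF)

end ProductsOfSeries

section LogarithmicSeries

variable {x : ℝ}

theorem hasSum_pnat_pow_div (hx : |x| < 1) :
    HasSum (fun m : ℕ+ => x ^ (m : ℕ) / (m : ℕ)) (-Real.log (1 - x)) := by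
  rw [hasSum_pnat_iff_hasSum_succ (f := fun m => x ^ m / m)]
  exact_mod_cast Real.hasSum_pow_div_log_of_abs_lt_one hx

theorem hasSum_prod_pow_div {ι : Type*} [Fintype ι] (hx : |x| < 1) :
    HasSum (fun k : ι → ℕ+ => ∏ i, x ^ (k i : ℕ) / (k i : ℕ))
      ((-Real.log (1 - x)) ^ Fintype.card ι) := by
  have h := hasSum_pnat_pow_div hx
  simpa [h.tsum_eq] using hasSum_prod_pi (ι := ι) fun _ => h.summable.norm

/-- For `x = |P|⁻¹` this is the paper's `u_P ^ n + (-1) ^ n v_P ^ n`. -/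
noncomputable def logPowerSum (x : ℝ) (n : ℕ) : ℝ :=
  (-Real.log (1 - x)) ^ n + (-Real.log (1 + x)) ^ n

/-- The contribution to `H(s)` of one prime of norm `x⁻¹` whose powers, with exponents `k`, make up
its share of the tuple; the parity condition is the requirement that the product be a square. -/
noncomputable def evenLogTerm {ι : Type*} [Fintype ι] (x : ℝ) (k : ι → ℕ+) : ℝ :=
  if Even (∑ i, (k i : ℕ)) then ∏ i, x ^ (k i : ℕ) / (k i : ℕ) else 0

theorem hasSum_evenLogTerm {ι : Type*} [Fintype ι] (hx : |x| < 1) :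
    HasSum (evenLogTerm x : (ι → ℕ+) → ℝ) (logPowerSum x (Fintype.card ι) / 2) := by
  have hsum := ((hasSum_prod_pow_div (ι := ι) hx).add
    (hasSum_prod_pow_div (ι := ι) ((abs_neg x).trans_lt hx))).div_const 2
  rw [sub_neg_eq_add] at hsum
  refine hsum.congr_fun fun k => ?_
  have hneg : ∏ i, (-x) ^ (k i : ℕ) / (k i : ℕ) =
      (-1) ^ (∑ i, (k i : ℕ)) * ∏ i, x ^ (k i : ℕ) / (k i : ℕ) := by
    simp_rw [neg_pow x, mul_div_assoc, Finset.prod_mul_distrib, Finset.prod_pow_eq_pow_sum]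
  rw [hneg, evenLogTerm]
  split_ifs with h
  · rw [h.neg_one_pow]; ring
  · rw [(Nat.not_even_iff_odd.1 h).neg_one_pow]; ring

theorem log_one_add_le_neg_log_one_sub (hx0 : 0 ≤ x) (hx1 : x < 1) :
    Real.log (1 + x) ≤ -Real.log (1 - x) := by
  have h := Real.log_nonpos (x := (1 - x) * (1 + x)) (by nlinarith) (by nlinarith)
  rw [Real.log_mul (by linarith) (by linarith)] at h
  linarith

theorem abs_neg_log_one_add_pow_le (hx0 : 0 ≤ x) (hx1 : x < 1) (n : ℕ) :
    |(-Real.log (1 + x)) ^ n| ≤ (-Real.log (1 - x)) ^ n := by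
  rw [abs_pow, abs_neg, abs_of_nonneg (Real.log_nonneg (by linarith))]
  exact pow_le_pow_left₀ (Real.log_nonneg (by linarith)) (log_one_add_le_neg_log_one_sub hx0 hx1) n

theorem logPowerSum_nonneg (hx0 : 0 ≤ x) (hx1 : x < 1) (n : ℕ) : 0 ≤ logPowerSum x n := by
  have := neg_le_of_abs_le (abs_neg_log_one_add_pow_le hx0 hx1 n)
  unfold logPowerSum
  linarith

theorem neg_log_one_sub_le_two_mul (hx0 : 0 ≤ x) (hx1 : x ≤ 1 / 2) : -Real.log (1 - x) ≤ 2 * x := by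
  have hlog := Real.one_sub_inv_le_log_of_pos (show 0 < 1 - x by linarith)
  have hinv : (1 - x)⁻¹ ≤ 1 + 2 * x := by
    rw [inv_le_iff_one_le_mul₀ (by linarith)]
    nlinarith
  linarith

theorem logPowerSum_one (hx : |x| < 1) : logPowerSum x 1 = -Real.log (1 - x ^ 2) := by
  obtain ⟨hneg, hpos⟩ := abs_lt.1 hx
  rw [show 1 - x ^ 2 = (1 - x) * (1 + x) by ring,
    Real.log_mul (by linarith) (by linarith), logPowerSum]
  ring

theorem logPowerSum_le_mul_sq (hx0 : 0 ≤ x) (hx1 : x ≤ 1 / 2) {n : ℕ} (hn : n ≠ 0) :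
    logPowerSum x n ≤ 2 ^ (n + 1) * x ^ 2 := by
  obtain rfl | hn : n = 1 ∨ 2 ≤ n := by lia
  · rw [logPowerSum_one (by rw [abs_of_nonneg hx0]; linarith)]
    have := neg_log_one_sub_le_two_mul (sq_nonneg x) (by nlinarith)
    norm_num
    linarith [sq_nonneg x]
  · have hu : 0 ≤ -Real.log (1 - x) :=
      neg_nonneg.2 (Real.log_nonpos (by linarith) (by linarith))
    calc logPowerSum x n
      _ ≤ 2 * (-Real.log (1 - x)) ^ n := by
          have := le_of_abs_le (abs_neg_log_one_add_pow_le hx0 (by linarith) n)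
          unfold logPowerSum
          linarith
      _ ≤ 2 * (2 * x) ^ n := by gcongr; exact neg_log_one_sub_le_two_mul hx0 hx1
      _ = 2 ^ (n + 1) * x ^ n := by ring
      _ ≤ 2 ^ (n + 1) * x ^ 2 := by gcongr ?_ * ?_; exact pow_le_pow_of_le_one hx0 (by linarith) hn

end LogarithmicSeries

section Factorization

variable {ι κ α : Type*}

/-- Factorizations of `Q` as an injection after a surjection from `ι` to `κ` are the same as
labellings of the range of `Q` by `κ`; there are thus `r!` of them if the range has `r` elements. -/
noncomputable def factorizationEquiv (Q : ι → α) :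
    {x : (κ ↪ α) × {φ : ι → κ // Function.Surjective φ} // x.1 ∘ x.2.1 = Q} ≃
      (κ ≃ Set.range Q) where
  toFun x := (Equiv.ofInjective x.1.1 x.1.1.injective).trans
    (Equiv.setCongr ((x.1.2.2.range_comp _).symm.trans (congrArg Set.range x.2)))
  invFun e := ⟨⟨e.toEmbedding.trans (Function.Embedding.subtype _),
    ⟨e.symm ∘ Set.rangeFactorization Q, e.symm.surjective.comp Set.rangeFactorization_surjective⟩⟩,
    funext fun i => by simp [Set.rangeFactorization]⟩
  left_inv := by
    rintro ⟨⟨P, φ⟩, rfl⟩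
    refine Subtype.ext (Prod.ext rfl (Subtype.ext (funext fun i => P.injective ?_)))
    simp
  right_inv _ := Equiv.ext fun _ => rfl

variable [Fintype κ]

theorem tsum_embedding_comp_surjective [Finite ι] (G : (ι → α) → ℝ≥0∞) :
    ∑' P : κ ↪ α, ∑' φ : {φ : ι → κ // Function.Surjective φ}, G (P ∘ φ.1) =
      (Fintype.card κ).factorial *
        ∑' Q : ι → α, if (Set.range Q).ncard = Fintype.card κ then G Q else 0 := by
  classical
  have := Fintype.ofFinite ι
  rw [← ENNReal.tsum_prod (f := fun (P : κ ↪ α)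
      (φ : {φ : ι → κ // Function.Surjective φ}) => G (P ∘ φ.1)),
    ← (Equiv.sigmaFiberEquiv fun x : (κ ↪ α) × {φ : ι → κ // Function.Surjective φ} =>
      x.1 ∘ x.2.1).tsum_eq, ENNReal.tsum_sigma', ← ENNReal.tsum_mul_left]
  refine tsum_congr fun Q => ?_
  rw [tsum_congr (g := fun _ => G Q) fun x => congrArg G x.2, ← (factorizationEquiv Q).symm.tsum_eq,
    tsum_fintype, Finset.sum_const, Finset.card_univ, nsmul_eq_mul, mul_ite, mul_zero,
    Set.ncard_eq_toFinset_card', Set.toFinset_card]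
  split_ifs with h
  · rw [Fintype.card_equiv (Fintype.equivOfCardEq h.symm)]
  · have : IsEmpty (κ ≃ Set.range Q) := ⟨fun e => h (Fintype.card_congr e).symm⟩
    simp

theorem tsum_eq_sum_tsum_embedding_comp_surjective [Fintype ι] [Nonempty ι] (G : (ι → α) → ℝ≥0∞) :
    ∑' Q, G Q = ∑ r ∈ Finset.Icc 1 (Fintype.card ι), (r.factorial : ℝ≥0∞)⁻¹ *
      ∑' P : Fin r ↪ α, ∑' φ : {φ : ι → Fin r // Function.Surjective φ}, G (P ∘ φ.1) := by
  have hmem (Q : ι → α) : (Set.range Q).ncard ∈ Finset.Icc 1 (Fintype.card ι) := by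
    rw [Finset.mem_Icc, Nat.one_le_iff_ne_zero, ← Nat.pos_iff_ne_zero, Set.ncard_pos,
      ← Set.image_univ, ← Nat.card_eq_fintype_card, ← Set.ncard_univ]
    exact ⟨Set.univ_nonempty.image Q, Set.ncard_image_le⟩
  have hr (r : ℕ) : (r.factorial : ℝ≥0∞) ≠ 0 := by exact_mod_cast r.factorial_ne_zero
  simp_rw [tsum_embedding_comp_surjective, Fintype.card_fin,
    ENNReal.inv_mul_cancel_left (hr _) (ENNReal.natCast_ne_top _)]
  rw [← Summable.tsum_finsetSum fun _ _ => ENNReal.summable]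
  exact tsum_congr fun Q => by rw [Finset.sum_ite_eq, if_pos (hmem Q)]

end Factorization

section FiberSizes

variable {κ : Type*}

/-- A bijection onto a disjoint union is a map to the index set together with a bijection from each
fibre. With finite types, this gives the double count behind multinomial coefficients. -/
def equivSigmaEquiv (ι : Type*) (β : κ → Type*) :
    (ι ≃ Σ j, β j) ≃ Σ φ : ι → κ, ∀ j, {i // φ i = j} ≃ β j where
  toFun e := ⟨fun i => (e i).1, fun j =>
    (e.subtypeEquiv (q := fun x => x.1 = j) fun _ => Iff.rfl).trans (Equiv.sigmaSubtype j)⟩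
  invFun x := (Equiv.sigmaFiberEquiv x.1).symm.trans (Equiv.sigmaCongrRight x.2)
  left_inv _ := rfl
  right_inv := by
    rintro ⟨φ, e⟩
    refine Sigma.ext rfl (heq_of_eq (funext fun j => Equiv.ext ?_))
    rintro ⟨i, rfl⟩
    rfl

variable {ι : Type*} [Fintype ι] [Fintype κ]

theorem card_setOf_card_fiber_eq [DecidableEq ι] [DecidableEq κ] {lam : κ → ℕ}
    (h : ∑ j, lam j = Fintype.card ι) :
    Fintype.card {φ : ι → κ // ∀ j, Fintype.card {i // φ i = j} = lam j} =
      Nat.multinomial Finset.univ lam := by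
  have hcard : (Fintype.card ι).factorial =
      ∑ φ : ι → κ, ∏ j, Fintype.card ({i // φ i = j} ≃ Fin (lam j)) := by
    simp_rw [← Fintype.card_pi, ← Fintype.card_sigma,
      ← Fintype.card_congr (equivSigmaEquiv ι fun j => Fin (lam j))]
    exact (Fintype.card_equiv (Fintype.equivOfCardEq (by simp [h]))).symm
  have hterm (φ : ι → κ) : ∏ j, Fintype.card ({i // φ i = j} ≃ Fin (lam j)) =
      if ∀ j, Fintype.card {i // φ i = j} = lam j then ∏ j, (lam j).factorial else 0 := by
    split_ifs with hφ
    · refine Finset.prod_congr rfl fun j _ => ?_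
      rw [Fintype.card_equiv (Fintype.equivFinOfCardEq (hφ j)), hφ]
    · obtain ⟨j, hj⟩ := not_forall.1 hφ
      refine Finset.prod_eq_zero (Finset.mem_univ j) (Fintype.card_eq_zero_iff.2 ⟨fun e => hj ?_⟩)
      simpa using Fintype.card_congr e
  have hpos : 0 < ∏ j, (lam j).factorial := Finset.prod_pos fun j _ => (lam j).factorial_pos
  refine Nat.eq_of_mul_eq_mul_left hpos ?_
  rw [Nat.multinomial_spec, h, hcard]
  simp_rw [hterm]
  rw [← Finset.sum_filter, Finset.sum_const, Fintype.card_subtype, smul_eq_mul, mul_comm]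

variable (κ) in
/-- Tuples of positive integers with sum `n`, indexed by `κ`: the paper's `(λ₁, …, λᵣ)`. -/
abbrev PositiveTuple (n : ℕ) : Type _ :=
  {lam : κ → ℕ // (∀ j, 0 < lam j) ∧ ∑ j, lam j = n}

instance PositiveTuple.instFinite (n : ℕ) : Finite (PositiveTuple κ n) := by
  classical
  refine ((Finset.piAntidiag Finset.univ n).finite_toSet.subset
    fun lam (hlam : (∀ j, 0 < lam j) ∧ ∑ j, lam j = n) => ?_).to_subtype
  simpa using hlam.2

/-- The tuple of fibre sizes of a surjection. -/
def fiberCard [DecidableEq κ] (φ : {φ : ι → κ // Function.Surjective φ}) :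
    PositiveTuple κ (Fintype.card ι) :=
  ⟨fun j => Fintype.card {i // φ.1 i = j},
    fun j => Fintype.card_pos_iff.2 ⟨⟨_, (φ.2 j).choose_spec⟩⟩, by
    rw [← Fintype.card_sigma, Fintype.card_congr (Equiv.sigmaFiberEquiv φ.1)]⟩

/-- The surjections with fibre sizes `lam` are all the maps with these fibre sizes, as `lam` is
positive. -/
def fiberCardFiberEquiv [DecidableEq κ] (lam : PositiveTuple κ (Fintype.card ι)) :
    {φ : {φ : ι → κ // Function.Surjective φ} // fiberCard φ = lam} ≃
      {φ : ι → κ // ∀ j, Fintype.card {i // φ i = j} = lam.1 j} where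
  toFun φ := ⟨φ.1.1, fun j => congrFun (congrArg Subtype.val φ.2) j⟩
  invFun φ := ⟨⟨φ.1, fun j => by
    obtain ⟨i⟩ := Fintype.card_pos_iff.1 ((φ.2 j).symm ▸ lam.2.1 j)
    exact ⟨i, i.2⟩⟩, Subtype.ext (funext φ.2)⟩

theorem sum_surjective_prod_fiberCard [DecidableEq ι] [DecidableEq κ]
    [Fintype (PositiveTuple κ (Fintype.card ι))] {R : Type*} [CommSemiring R] (g : κ → ℕ → R) :
    ∑ φ : {φ : ι → κ // Function.Surjective φ}, ∏ j, g j (Fintype.card {i // φ.1 i = j}) =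
      ∑ lam : PositiveTuple κ (Fintype.card ι),
        Nat.multinomial Finset.univ lam.1 * ∏ j, g j (lam.1 j) := by
  rw [← Fintype.sum_fiberwise fiberCard]
  refine Fintype.sum_congr _ _ fun lam => ?_
  rw [← card_setOf_card_fiber_eq lam.2.2, ← Fintype.card_congr (fiberCardFiberEquiv lam),
    ← nsmul_eq_mul]
  refine (Fintype.sum_congr _ (fun _ => ∏ j, g j (lam.1 j)) ?_).trans (Finset.sum_const _)
  rintro ⟨φ, rfl⟩
  rfl

end FiberSizes

section Arithmetic

theorem emultiplicity_prod_pow {κ M : Type*} [Fintype κ] [CommMonoidWithZero M]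
    [IsCancelMulZero M] {p : κ → M} (hp : ∀ j, Prime (p j))
    (hdvd : Pairwise fun i j => ¬p i ∣ p j) (n : κ → ℕ) (j : κ) :
    emultiplicity (p j) (∏ i, p i ^ n i) = n j := by
  rw [Finset.emultiplicity_prod (hp j), Finset.sum_eq_single j]
  · exact emultiplicity_pow_self_of_prime (hp j) _
  · exact fun i _ hij => emultiplicity_eq_zero.2 fun h => hdvd hij.symm ((hp j).dvd_of_dvd_pow h)
  · simp

theorem isSquare_prod_pow_iff {κ M : Type*} [Fintype κ] [CommMonoidWithZero M]
    [IsCancelMulZero M] {p : κ → M} (hp : ∀ j, Prime (p j))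
    (hdvd : Pairwise fun i j => ¬p i ∣ p j) {n : κ → ℕ} :
    IsSquare (∏ j, p j ^ n j) ↔ ∀ j, Even (n j) := by
  refine ⟨fun ⟨g, hg⟩ j => ?_, fun h => ?_⟩
  · have hmul := emultiplicity_prod_pow hp hdvd n j
    rw [hg, emultiplicity_mul (hp j)] at hmul
    have hfin : FiniteMultiplicity (p j) g := by
      rw [finiteMultiplicity_iff_emultiplicity_ne_top]
      rintro htop
      simp [htop] at hmul
    rw [hfin.emultiplicity_eq_multiplicity] at hmul
    exact ⟨_, (Nat.cast_injective (R := ℕ∞) (by exact_mod_cast hmul)).symm⟩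
  · choose m hm using h
    exact ⟨∏ j, p j ^ m j, by simp_rw [hm, pow_add, Finset.prod_mul_distrib]⟩

/-- The primes of `K[X]`, with the monic representative chosen in each associate class. -/
abbrev MonicIrreducible (K : Type*) [Field K] : Type _ :=
  {P : K[X] // P.Monic ∧ Irreducible P}

variable {K : Type*} [Field K]

theorem MonicIrreducible.eq_of_dvd {P Q : MonicIrreducible K} (h : P.1 ∣ Q.1) : P = Q :=
  Subtype.ext (eq_of_monic_of_associated P.2.1 Q.2.1 (P.2.2.associated_of_dvd Q.2.2 h))

theorem MonicIrreducible.eq_of_dvd_pow {P Q : MonicIrreducible K} {n : ℕ} (h : P.1 ∣ Q.1 ^ n) :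
    P = Q :=
  eq_of_dvd (P.2.2.prime.dvd_of_dvd_pow h)

theorem MonicIrreducible.pow_injective :
    Function.Injective fun x : MonicIrreducible K × ℕ+ => x.1.1 ^ (x.2 : ℕ) := by
  rintro ⟨P, m⟩ ⟨Q, n⟩ (h : P.1 ^ (m : ℕ) = Q.1 ^ (n : ℕ))
  obtain rfl := eq_of_dvd_pow (h ▸ dvd_pow_self P.1 m.ne_zero)
  exact Prod.ext rfl (PNat.eq (pow_injective_of_not_isUnit P.2.2.not_isUnit P.2.2.ne_zero h))

theorem isSquare_prod_monicIrreducible_pow_iff {ι κ : Type*} [Fintype ι] [Finite κ]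
    [DecidableEq κ] (P : κ ↪ MonicIrreducible K) (φ : ι → κ) (k : ι → ℕ) :
    IsSquare (∏ i, (P (φ i)).1 ^ k i) ↔ ∀ j, Even (∑ i : {i // φ i = j}, k i) := by
  have := Fintype.ofFinite κ
  have hprod : ∏ i, (P (φ i)).1 ^ k i = ∏ j, (P j).1 ^ ∑ i : {i // φ i = j}, k i := by
    rw [← Fintype.prod_fiberwise φ]
    refine Finset.prod_congr rfl fun j _ => ?_
    rw [← Finset.prod_pow_eq_pow_sum]
    exact Finset.prod_congr rfl fun i _ => by rw [i.2]
  rw [hprod]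
  exact isSquare_prod_pow_iff (fun j => (P j).2.2.prime)
    fun i j hij h => hij (P.injective (MonicIrreducible.eq_of_dvd h))

theorem setOf_monic_irreducible_dvd_prod_pow {ι : Type*} [Fintype ι]
    (Q : ι → MonicIrreducible K) {k : ι → ℕ} (hk : ∀ i, k i ≠ 0) :
    {R : K[X] | R.Monic ∧ Irreducible R ∧ R ∣ ∏ i, (Q i).1 ^ k i} =
      Subtype.val '' Set.range Q := by
  ext R
  constructor
  · rintro ⟨hmonic, hirr, hdvd⟩
    obtain ⟨i, -, hi⟩ := (hirr.prime.dvd_finsetProd_iff _).1 hdvd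
    exact ⟨⟨R, hmonic, hirr⟩,
      ⟨i, (MonicIrreducible.eq_of_dvd_pow (P := ⟨R, hmonic, hirr⟩) hi).symm⟩, rfl⟩
  · rintro ⟨_, ⟨i, rfl⟩, rfl⟩
    exact ⟨(Q i).2.1, (Q i).2.2, (dvd_pow_self _ (hk i)).trans
      (Finset.dvd_prod_of_mem _ (Finset.mem_univ i))⟩

end Arithmetic

section VonMangoldt

variable {K : Type} [Field K]

theorem vonMangoldt_pow (P : MonicIrreducible K) (m : ℕ+) :
    vonMangoldt (P.1 ^ (m : ℕ)) = P.1.natDegree := by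
  have h : ∃ Q : K[X], ∃ n : ℕ, Q.Monic ∧ Irreducible Q ∧ 1 ≤ n ∧ P.1 ^ (m : ℕ) = Q ^ n :=
    ⟨P.1, m, P.2.1, P.2.2, m.pos, rfl⟩
  obtain ⟨n, hmonic, hirr, -, hpow⟩ := h.choose_spec
  have hP : P = ⟨h.choose, hmonic, hirr⟩ :=
    MonicIrreducible.eq_of_dvd_pow (hpow ▸ dvd_pow_self P.1 m.ne_zero)
  rw [vonMangoldt, dif_pos h, show h.choose = P.1 from (congrArg Subtype.val hP).symm]

theorem vonMangoldt_nonneg (f : K[X]) : 0 ≤ vonMangoldt f := by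
  unfold vonMangoldt
  split_ifs <;> positivity

theorem exists_pow_eq_of_vonMangoldt_ne_zero {f : K[X]} (hf : vonMangoldt f ≠ 0) :
    ∃ x : MonicIrreducible K × ℕ+, x.1.1 ^ (x.2 : ℕ) = f := by
  unfold vonMangoldt at hf
  split_ifs at hf with h
  · obtain ⟨P, n, hmonic, hirr, hn, rfl⟩ := h
    exact ⟨(⟨P, hmonic, hirr⟩, ⟨n, hn⟩), rfl⟩
  · exact absurd rfl hf

end VonMangoldt

section Norm

variable {K : Type*} [Field K] [Fintype K]

/-- The inverse norm `|P|⁻¹ = q ^ (-deg P)`. -/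
noncomputable def normInv (P : K[X]) : ℝ := ((Fintype.card K : ℝ) ^ P.natDegree)⁻¹

theorem normInv_nonneg (P : K[X]) : 0 ≤ normInv P := by
  unfold normInv
  positivity

theorem normInv_le_half {P : K[X]} (hP : P.natDegree ≠ 0) : normInv P ≤ 1 / 2 := by
  have hcard : (2 : ℝ) ≤ Fintype.card K := by exact_mod_cast Fintype.one_lt_card (α := K)
  rw [normInv, one_div]
  exact inv_anti₀ two_pos (hcard.trans (le_self_pow₀ (by linarith) hP))

theorem normInv_lt_one {P : K[X]} (hP : P.natDegree ≠ 0) : normInv P < 1 :=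
  (normInv_le_half hP).trans_lt (by norm_num)

theorem abs_normInv_lt_one {P : K[X]} (hP : P.natDegree ≠ 0) : |normInv P| < 1 :=
  (abs_of_nonneg (normInv_nonneg P)).trans_lt (normInv_lt_one hP)

end Norm

section SquareTuples

variable {ι : Type*} [Fintype ι] {K : Type} [Field K]

variable (ι K) in
/-- The tuples over which `H` is summed. -/
def squareTuples : Set (ι → K[X]) :=
  {f | (∀ i, (f i).Monic ∧ 0 < (f i).natDegree) ∧ IsSquare (∏ i, f i)}

theorem monicIrreducible_pow_mem_squareTuples_iff {κ : Type*} [Finite κ] [DecidableEq κ]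
    (P : κ ↪ MonicIrreducible K) (φ : ι → κ) (k : ι → ℕ+) :
    (fun i => (P (φ i)).1 ^ (k i : ℕ)) ∈ squareTuples ι K ↔
      ∀ j, Even (∑ i : {i // φ i = j}, (k i : ℕ)) := by
  rw [← isSquare_prod_monicIrreducible_pow_iff P φ fun i => (k i : ℕ)]
  refine and_iff_right fun i => ⟨(P (φ i)).2.1.pow _, ?_⟩
  rw [natDegree_pow]
  exact Nat.mul_pos (k i).pos (P (φ i)).2.2.natDegree_pos

variable [Fintype K]

/-- The summand of `H`, for tuples indexed by an arbitrary finite type. -/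
noncomputable def Hsummand (f : ι → K[X]) : ℝ :=
  (∏ i, vonMangoldt (f i) * normInv (f i) / (f i).natDegree) *
    ∏ᶠ P ∈ {P : K[X] | P.Monic ∧ Irreducible P ∧ P ∣ ∏ i, f i}, (1 + normInv P)⁻¹

theorem Hsummand_nonneg (f : ι → K[X]) : 0 ≤ Hsummand f := by
  refine mul_nonneg (Finset.prod_nonneg fun i _ => ?_)
    (finprod_nonneg fun P => finprod_nonneg fun _ => ?_)
  · have := vonMangoldt_nonneg (f i)
    have := normInv_nonneg (f i)
    positivity
  · have := normInv_nonneg P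
    positivity

theorem vonMangoldt_mul_normInv_div_natDegree_pow (P : MonicIrreducible K) (m : ℕ+) :
    vonMangoldt (P.1 ^ (m : ℕ)) * normInv (P.1 ^ (m : ℕ)) / (P.1 ^ (m : ℕ)).natDegree =
      normInv P.1 ^ (m : ℕ) / (m : ℕ) := by
  have hdeg : (P.1.natDegree : ℝ) ≠ 0 := by exact_mod_cast P.2.2.natDegree_pos.ne'
  rw [vonMangoldt_pow, natDegree_pow, normInv, normInv, natDegree_pow, inv_pow, ← pow_mul,
    mul_comm P.1.natDegree]
  push_cast
  field_simp

theorem Hsummand_monicIrreducible_pow {κ : Type*} [Fintype κ] (P : κ ↪ MonicIrreducible K)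
    {φ : ι → κ} (hφ : Function.Surjective φ) (k : ι → ℕ+) :
    Hsummand (fun i => (P (φ i)).1 ^ (k i : ℕ)) =
      (∏ i, normInv (P (φ i)).1 ^ (k i : ℕ) / (k i : ℕ)) * ∏ j, (1 + normInv (P j).1)⁻¹ := by
  have hset := setOf_monic_irreducible_dvd_prod_pow (P ∘ φ) fun i => (k i).ne_zero
  rw [hφ.range_comp, ← Set.range_comp] at hset
  simp_rw [Hsummand, vonMangoldt_mul_normInv_div_natDegree_pow]
  exact congrArg _ ((congrArg (fun s => ∏ᶠ R ∈ s, (1 + normInv R)⁻¹) hset).trans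
    ((finprod_mem_range (Subtype.val_injective.comp P.injective)).trans
      (finprod_eq_prod_of_fintype _)))

theorem indicator_Hsummand_monicIrreducible_pow {κ : Type*} [Fintype κ] [DecidableEq κ]
    (P : κ ↪ MonicIrreducible K) {φ : ι → κ} (hφ : Function.Surjective φ) (k : ι → ℕ+) :
    (squareTuples ι K).indicator Hsummand (fun i => (P (φ i)).1 ^ (k i : ℕ)) =
      ∏ j, evenLogTerm (normInv (P j).1) (fun i : {i // φ i = j} => k i) *
        (1 + normInv (P j).1)⁻¹ := by
  classical
  simp_rw [Set.indicator_apply, monicIrreducible_pow_mem_squareTuples_iff, evenLogTerm,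
    Finset.prod_mul_distrib, Finset.prod_ite_zero, ite_mul, zero_mul]
  simp only [Finset.mem_univ, true_imp_iff]
  refine if_congr Iff.rfl ?_ rfl
  rw [Hsummand_monicIrreducible_pow P hφ, ← Fintype.prod_fiberwise φ]
  congr! 3 with j _ i
  rw [i.2]

theorem hasSum_indicator_Hsummand_monicIrreducible_pow {κ : Type*} [Fintype κ] [DecidableEq κ]
    (P : κ ↪ MonicIrreducible K) {φ : ι → κ} (hφ : Function.Surjective φ) :
    HasSum (fun k : ι → ℕ+ =>
        (squareTuples ι K).indicator Hsummand fun i => (P (φ i)).1 ^ (k i : ℕ))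
      (∏ j, logPowerSum (normInv (P j).1) (Fintype.card {i // φ i = j}) / 2 *
        (1 + normInv (P j).1)⁻¹) := by
  have hterm (j : κ) := (hasSum_evenLogTerm (ι := {i // φ i = j})
    (abs_normInv_lt_one (P j).2.2.natDegree_pos.ne')).mul_right (1 + normInv (P j).1)⁻¹
  simp_rw [indicator_Hsummand_monicIrreducible_pow P hφ, ← (hterm _).tsum_eq]
  exact hasSum_prod_fiber φ fun j => (hterm j).summable.norm

end SquareTuples

section Convergence

variable {K : Type*} [Field K] [Fintype K]

theorem tsum_monic_pow_natDegree (t : ℝ≥0∞) :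
    ∑' f : {f : K[X] // f.Monic}, t ^ f.1.natDegree = (1 - Fintype.card K * t)⁻¹ := by
  rw [← (Equiv.sigmaFiberEquiv fun f : {f : K[X] // f.Monic} => f.1.natDegree).tsum_eq,
    ENNReal.tsum_sigma', ← ENNReal.tsum_geometric]
  refine tsum_congr fun n => ?_
  let e : {f : {f : K[X] // f.Monic} // f.1.natDegree = n} ≃ (Fin n → K) :=
    (Equiv.subtypeSubtypeEquivSubtypeInter _ fun f : K[X] => f.natDegree = n).trans
      ((monicEquivDegreeLT n).trans (degreeLTEquiv K n).toEquiv)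
  calc ∑' f : {f : {f : K[X] // f.Monic} // f.1.natDegree = n}, t ^ f.1.1.natDegree
    _ = ∑' _ : {f : {f : K[X] // f.Monic} // f.1.natDegree = n}, t ^ n :=
        tsum_congr fun f => by rw [f.2]
    _ = ∑' _ : Fin n → K, t ^ n := e.tsum_eq fun _ => t ^ n
    _ = (Fintype.card K * t) ^ n := by simp [mul_pow]

theorem summable_normInv_pow {n : ℕ} (hn : 1 < n) :
    Summable fun f : {f : K[X] // f.Monic} => normInv f.1 ^ n := by
  have hq : (Fintype.card K : ℝ≥0∞) ≠ 0 := by simp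
  have hratio : Fintype.card K * ((Fintype.card K : ℝ≥0∞)⁻¹ ^ n) < 1 := by
    obtain ⟨m, rfl⟩ := Nat.exists_eq_add_of_lt hn
    rw [pow_succ', ENNReal.mul_inv_cancel_left hq (ENNReal.natCast_ne_top _)]
    refine pow_lt_one₀ zero_le (ENNReal.inv_lt_one.2 ?_) (by lia)
    exact_mod_cast Fintype.one_lt_card
  have hsum : ∑' f : {f : K[X] // f.Monic},
      ((Fintype.card K : ℝ≥0∞)⁻¹ ^ n) ^ f.1.natDegree ≠ ⊤ := by
    rw [tsum_monic_pow_natDegree]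
    exact ENNReal.inv_ne_top.2 (tsub_pos_of_lt hratio).ne'
  refine (ENNReal.summable_toReal hsum).congr fun f => ?_
  simp [normInv, ← pow_mul, mul_comm]

/-- The factor that a prime `P` contributes to the right-hand side of the theorem when it underlies
`n` entries of the tuple. -/
noncomputable def weight (P : K[X]) (n : ℕ) : ℝ :=
  logPowerSum (normInv P) n / (n.factorial * (1 + normInv P))

theorem multinomial_mul_prod_logPowerSum {κ : Type*} [Fintype κ] (P : κ → K[X]) {n : ℕ}
    (lam : PositiveTuple κ n) :
    Nat.multinomial Finset.univ lam.1 *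
        ∏ j, (logPowerSum (normInv (P j)) (lam.1 j) / 2 * (1 + normInv (P j))⁻¹) =
      n.factorial / 2 ^ Fintype.card κ * ∏ j, weight (P j) (lam.1 j) := by
  have hfac : (∏ j, ((lam.1 j).factorial : ℝ)) * Nat.multinomial Finset.univ lam.1 =
      n.factorial := by
    exact_mod_cast lam.2.2 ▸ Nat.multinomial_spec Finset.univ lam.1
  have hne : ∏ j, ((lam.1 j).factorial : ℝ) ≠ 0 :=
    Finset.prod_ne_zero_iff.2 fun j _ => by positivity
  simp_rw [← hfac, weight, div_eq_mul_inv, mul_inv, Finset.prod_mul_distrib,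
    Finset.prod_inv_distrib, Finset.prod_const, Finset.card_univ]
  field_simp

theorem weight_nonneg {P : K[X]} (hP : P.natDegree ≠ 0) (n : ℕ) : 0 ≤ weight P n := by
  have := logPowerSum_nonneg (normInv_nonneg P) (normInv_lt_one hP) n
  have := normInv_nonneg P
  unfold weight
  positivity

theorem weight_le_mul_normInv_sq {P : K[X]} (hP : P.natDegree ≠ 0) {n : ℕ} (hn : n ≠ 0) :
    weight P n ≤ 2 ^ (n + 1) * normInv P ^ 2 := by
  have hx := normInv_nonneg P
  have hfac : (1 : ℝ) ≤ n.factorial := by exact_mod_cast n.factorial_pos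
  exact (div_le_self (logPowerSum_nonneg hx (normInv_lt_one hP) n) (by nlinarith)).trans
    (logPowerSum_le_mul_sq hx (normInv_le_half hP) hn)

theorem summable_weight {n : ℕ} (hn : n ≠ 0) :
    Summable fun P : MonicIrreducible K => weight P.1 n := by
  have hinj : Function.Injective fun P : MonicIrreducible K =>
      (⟨P.1, P.2.1⟩ : {f : K[X] // f.Monic}) :=
    fun _ _ h => Subtype.ext (congrArg (fun f : {f : K[X] // f.Monic} => f.1) h)
  exact (((summable_normInv_pow one_lt_two).comp_injective hinj).mul_left _).of_nonneg_of_le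
    (fun P => weight_nonneg P.2.2.natDegree_pos.ne' n)
    fun P => weight_le_mul_normInv_sq P.2.2.natDegree_pos.ne' hn

theorem summable_prod_weight {κ : Type*} [Fintype κ] {lam : κ → ℕ} (hlam : ∀ j, 0 < lam j) :
    Summable fun P : κ ↪ MonicIrreducible K => ∏ j, weight (P j).1 (lam j) :=
  (summable_norm_prod_pi fun j => (summable_weight (hlam j).ne').norm).of_norm.comp_injective
    DFunLike.coe_injective

theorem prod_weight_nonneg {κ : Type*} [Fintype κ] (P : κ → MonicIrreducible K) (lam : κ → ℕ) :
    0 ≤ ∏ j, weight (P j).1 (lam j) :=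
  Finset.prod_nonneg fun j _ => weight_nonneg (P j).2.2.natDegree_pos.ne' _

theorem hasSum_tsum_prod_weight (κ : Type*) [Fintype κ] (n : ℕ) :
    HasSum (fun P : κ ↪ MonicIrreducible K =>
        ∑' lam : PositiveTuple κ n, ∏ j, weight (P j).1 (lam.1 j))
      (∑' lam : PositiveTuple κ n, ∑' P : κ ↪ MonicIrreducible K,
        ∏ j, weight (P j).1 (lam.1 j)) := by
  have := Fintype.ofFinite (PositiveTuple κ n)
  simp_rw [tsum_fintype (L := SummationFilter.unconditional (PositiveTuple κ n))]
  exact hasSum_sum fun lam _ => (summable_prod_weight lam.2.1).hasSum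

end Convergence

section Rearrangement

variable {ι κ : Type*} [Fintype ι] [Fintype κ] {K : Type} [Field K] [Fintype K]

theorem sum_surjective_tsum_indicator_Hsummand [DecidableEq ι] [DecidableEq κ]
    (P : κ ↪ MonicIrreducible K) :
    ∑ φ : {φ : ι → κ // Function.Surjective φ}, ∑' k : ι → ℕ+,
        (squareTuples ι K).indicator Hsummand (fun i => (P (φ.1 i)).1 ^ (k i : ℕ)) =
      (Fintype.card ι).factorial / 2 ^ Fintype.card κ *
        ∑' lam : PositiveTuple κ (Fintype.card ι), ∏ j, weight (P j).1 (lam.1 j) := by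
  have := Fintype.ofFinite (PositiveTuple κ (Fintype.card ι))
  simp_rw [(hasSum_indicator_Hsummand_monicIrreducible_pow P (Subtype.prop _)).tsum_eq]
  rw [sum_surjective_prod_fiberCard fun j n =>
    logPowerSum (normInv (P j).1) n / 2 * (1 + normInv (P j).1)⁻¹, tsum_fintype, Finset.mul_sum]
  exact Finset.sum_congr rfl fun lam _ => multinomial_mul_prod_logPowerSum _ lam

theorem indicator_Hsummand_nonneg (f : ι → K[X]) : 0 ≤ (squareTuples ι K).indicator Hsummand f :=
  Set.indicator_nonneg (fun f _ => Hsummand_nonneg f) f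

theorem tsum_surjective_tsum_ofReal_indicator_Hsummand (P : κ ↪ MonicIrreducible K) :
    ∑' φ : {φ : ι → κ // Function.Surjective φ}, ∑' k : ι → ℕ+, ENNReal.ofReal
        ((squareTuples ι K).indicator Hsummand fun i => ((P ∘ φ.1) i).1 ^ (k i : ℕ)) =
      ENNReal.ofReal ((Fintype.card ι).factorial / 2 ^ Fintype.card κ *
        ∑' lam : PositiveTuple κ (Fintype.card ι), ∏ j, weight (P j).1 (lam.1 j)) := by
  classical
  rw [tsum_fintype, ← sum_surjective_tsum_indicator_Hsummand, ENNReal.ofReal_sum_of_nonneg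
    fun _ _ => tsum_nonneg fun _ => indicator_Hsummand_nonneg _]
  exact Finset.sum_congr rfl fun φ _ => (ENNReal.ofReal_tsum_of_nonneg
    (fun _ => indicator_Hsummand_nonneg _)
    (hasSum_indicator_Hsummand_monicIrreducible_pow P φ.2).summable).symm

theorem tsum_ofReal_indicator_Hsummand_eq_tsum_tsum :
    ∑' f : ι → K[X], ENNReal.ofReal ((squareTuples ι K).indicator Hsummand f) =
      ∑' Q : ι → MonicIrreducible K, ∑' k : ι → ℕ+, ENNReal.ofReal
        ((squareTuples ι K).indicator Hsummand fun i => (Q i).1 ^ (k i : ℕ)) := by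
  have hinj := MonicIrreducible.pow_injective (K := K).comp_left (α := ι)
  rw [← ENNReal.tsum_prod, ← (Equiv.arrowProdEquivProdArrow ι _ _).tsum_eq]
  refine (hinj.tsum_eq fun f hf => ?_).symm
  have hΛ (i : ι) : vonMangoldt (f i) ≠ 0 := fun h => hf <| by
    have hzero : Hsummand f = 0 := by
      rw [Hsummand, Finset.prod_eq_zero (Finset.mem_univ i) (by rw [h, zero_mul, zero_div]),
        zero_mul]
    simp [Set.indicator_apply_eq_zero.2 fun _ => hzero]
  choose x hx using fun i => exists_pow_eq_of_vonMangoldt_ne_zero (hΛ i)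
  exact ⟨x, funext hx⟩

theorem tsum_ofReal_indicator_Hsummand [Nonempty ι] :
    ∑' f : ι → K[X], ENNReal.ofReal ((squareTuples ι K).indicator Hsummand f) =
      ∑ r ∈ Finset.Icc 1 (Fintype.card ι), ENNReal.ofReal
        ((Fintype.card ι).factorial / (2 ^ r * r.factorial) *
          ∑' lam : PositiveTuple (Fin r) (Fintype.card ι),
            ∑' P : Fin r ↪ MonicIrreducible K, ∏ j, weight (P j).1 (lam.1 j)) := by
  rw [tsum_ofReal_indicator_Hsummand_eq_tsum_tsum, tsum_eq_sum_tsum_embedding_comp_surjective]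
  refine Finset.sum_congr rfl fun r _ => ?_
  simp_rw [tsum_surjective_tsum_ofReal_indicator_Hsummand]
  have hsum := (hasSum_tsum_prod_weight (K := K) (Fin r) (Fintype.card ι)).mul_left
    ((Fintype.card ι).factorial / 2 ^ Fintype.card (Fin r) : ℝ)
  have hnonneg (P : Fin r ↪ MonicIrreducible K) : (0 : ℝ) ≤
      (Fintype.card ι).factorial / 2 ^ Fintype.card (Fin r) *
        ∑' lam : PositiveTuple (Fin r) (Fintype.card ι), ∏ j, weight (P j).1 (lam.1 j) :=
    mul_nonneg (by positivity) (tsum_nonneg fun lam => prod_weight_nonneg P lam.1)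
  rw [← ENNReal.ofReal_tsum_of_nonneg hnonneg hsum.summable, hsum.tsum_eq,
    ← ENNReal.ofReal_natCast, ← ENNReal.ofReal_inv_of_pos (by positivity),
    ← ENNReal.ofReal_mul (by positivity), Fintype.card_fin]
  congr 1
  field_simp

theorem tsum_indicator_Hsummand [Nonempty ι] :
    ∑' f : ι → K[X], (squareTuples ι K).indicator Hsummand f =
      ∑ r ∈ Finset.Icc 1 (Fintype.card ι), (Fintype.card ι).factorial / (2 ^ r * r.factorial) *
        ∑' lam : PositiveTuple (Fin r) (Fintype.card ι),
          ∑' P : Fin r ↪ MonicIrreducible K, ∏ j, weight (P j).1 (lam.1 j) := by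
  have h := congrArg ENNReal.toReal (tsum_ofReal_indicator_Hsummand (ι := ι) (K := K))
  rw [ENNReal.tsum_toReal_eq fun _ => ENNReal.ofReal_ne_top,
    ENNReal.toReal_sum fun _ _ => ENNReal.ofReal_ne_top] at h
  simp_rw [ENNReal.toReal_ofReal (indicator_Hsummand_nonneg _)] at h
  refine h.trans (Finset.sum_congr rfl fun r _ => ENNReal.toReal_ofReal ?_)
  exact mul_nonneg (by positivity)
    (tsum_nonneg fun lam => tsum_nonneg fun P => prod_weight_nonneg P lam.1)

end Rearrangement

/-- Embeddings into a subtype are injective functions with values in it. -/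
def embeddingSubtypeEquiv (κ : Type*) {α : Type*} (p : α → Prop) :
    (κ ↪ {a // p a}) ≃ {f : κ → α // (∀ j, p (f j)) ∧ Function.Injective f} where
  toFun f := ⟨fun j => (f j).1, fun j => (f j).2, Subtype.val_injective.comp f.injective⟩
  invFun f := ⟨fun j => ⟨f.1 j, f.2.1 j⟩, fun _ _ h => f.2.2 (congrArg Subtype.val h)⟩

theorem weight_eq {K : Type} [Field K] [Fintype K] (P : K[X]) (n : ℕ) :
    weight P n = (uP P ^ n + (-1) ^ n * vP P ^ n) /
      (n.factorial * (1 + ((Fintype.card K : ℝ) ^ P.natDegree)⁻¹)) := by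
  rw [← neg_pow]
  rfl

theorem Hfun_eq_tsum_indicator (K : Type) [Field K] [Fintype K] (s : ℕ) :
    Hfun K s = ∑' f, (squareTuples (Fin s) K).indicator Hsummand f :=
  tsum_subtype (squareTuples (Fin s) K) Hsummand

/-- For every prime power `q` (realized as the cardinality of a finite field `Fq`) and
every positive integer `s`,
`H(s) = ∑_{r=1}^{s} (s!/(2^r r!)) ∑_{λ₁+⋯+λᵣ=s, λᵢ≥1} ∑_{P₁,…,Pᵣ distinct}
   ∏_{i=1}^{r} (u_{Pᵢ}^{λᵢ} + (-1)^{λᵢ} v_{Pᵢ}^{λᵢ}) / (λᵢ! (1 + |Pᵢ|⁻¹))`,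
the middle sum over tuples of positive integers summing to `s` and the inner sum over
tuples of pairwise distinct monic irreducible polynomials in `Fq[X]`. -/
theorem Hfun_eq (Fq : Type) [Field Fq] [Fintype Fq] (s : ℕ) (hs : 1 ≤ s) :
    Hfun Fq s =
      ∑ r ∈ Finset.Icc 1 s,
        ((s.factorial : ℝ) / (2 ^ r * (r.factorial : ℝ))) *
          ∑' lam : {lam : Fin r → ℕ // (∀ i, 0 < lam i) ∧ ∑ i, lam i = s},
            ∑' P : {P : Fin r → Polynomial Fq //
                (∀ i, (P i).Monic ∧ Irreducible (P i)) ∧ Function.Injective P},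
              ∏ i,
                (uP (P.1 i) ^ lam.1 i + (-1 : ℝ) ^ lam.1 i * vP (P.1 i) ^ lam.1 i) /
                  (((lam.1 i).factorial : ℝ) *
                    (1 + ((Fintype.card Fq : ℝ) ^ (P.1 i).natDegree)⁻¹)) := by
  have : Nonempty (Fin s) := Fin.pos_iff_nonempty.1 hs
  rw [Hfun_eq_tsum_indicator, tsum_indicator_Hsummand, Fintype.card_fin]
  simp_rw [← weight_eq]
  refine Finset.sum_congr rfl fun r _ => congrArg _ (tsum_congr fun lam => ?_)
  exact (embeddingSubtypeEquiv (Fin r) _).tsum_eq fun P => ∏ i, weight (P.1 i) (lam.1 i)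
end

section
/- For every positive integer s there is a constant C_s > 0, depending only on s, such that for every prime power q: if s is even then |H(s) − (s!/(2^{s/2} (s/2)!)) q^{−s/2}| ≤ C_s q^{−(s+1)/2}, and if s is odd then H(s) ≤ C_s q^{−(s+1)/2}. -/
/-!
Only tuples of prime powers `f i = P ^ k` contribute to `H(s)`, and if their product is a square
then no prime occurs with total exponent one. Group the indices into blocks carrying the same
prime and put `v = q ^ (-1/2)`. Since there are at most `q ^ d` primes of degree `d`, a block of
size `b` contributes `O(v ^ (b + 1))`, unless `b = 2`, when it contributes `v ^ 2 + O(v ^ 3)`; for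
`b = 1` this is because the exponent is at least two. So only groupings into pairs, that is,
perfect matchings of the indices, reach the order `v ^ s`.
Quantitatively, splitting off the block of one index bounds the total weight `T n` of the
`n`-tuples by `T (n + 1) ≤ ∑ c ≤ n, (n choose c) * T c * β (n + 1 - c)`, with `β b` the total
weight of a block of size `b`, and the recurrence is solved to leading order. The sums are taken
in `ℝ≥0∞`, so that convergence is a consequence of the bound.

For the lower bound keep only the tuples of linear polynomials `X - a`. Inserting a new value twice
shows that at least `(s - 1) * (s - 3) * ⋯ * 1 * (q - s) ^ (s / 2)` of them have a square product
when `s` is even; each has weight `q ^ (-s)`, and the product over the primes dividing it is at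
least `1 - s / q`.
-/

open Polynomial

open scoped ENNReal
open Finset.HasAntidiagonal (antidiagonal mem_antidiagonal)

namespace Hfun

theorem tsum_pi_prod {ι α : Type*} [Fintype ι] (c : α → ℝ≥0∞) :
    ∑' k : ι → α, ∏ i, c (k i) = (∑' a, c a) ^ Fintype.card ι := by
  refine Fintype.induction_empty_option
    (P := fun ι _ => ∑' k : ι → α, ∏ i, c (k i) = (∑' a, c a) ^ Fintype.card ι)
    (fun ι κ _ e ih => ?_) (by simp [tsum_fintype]) (fun ι _ ih => ?_) ι
  · let _ := Fintype.ofEquiv κ e.symm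
    rw [← Fintype.card_congr e, ← ih, ← (e.arrowCongr (Equiv.refl α)).tsum_eq]
    simp only [← e.prod_comp, Equiv.arrowCongr_apply, Equiv.coe_refl, Function.comp_apply, id,
      Equiv.symm_apply_apply]
  · rw [← Equiv.piOptionEquivProd.symm.tsum_eq, ENNReal.tsum_prod', Fintype.card_option,
      pow_succ', ← ih, ← ENNReal.tsum_mul_right]
    simp only [Fintype.prod_option, Equiv.piOptionEquivProd_symm_apply, ENNReal.tsum_mul_left]

theorem tsum_pi_split {ι α : Type*} [Fintype ι] (p : ι → Prop) [Fintype {i // p i}]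
    [Fintype {i // ¬ p i}]
    (A : ({i // p i} → α) → Prop) (B : ({i // ¬ p i} → α) → Prop) (w : α → ℝ≥0∞) :
    ∑' x : {x : ι → α // A (fun i => x i) ∧ B (fun i => x i)}, ∏ i, w (x.1 i) =
      (∑' y : {y // A y}, ∏ i, w (y.1 i)) * ∑' z : {z // B z}, ∏ i, w (z.1 i) := by
  classical
  let e : {x : ι → α // A (fun i => x i) ∧ B (fun i => x i)} ≃ {y // A y} × {z // B z} :=
    ((Equiv.piEquivPiSubtypeProd p fun _ => α).subtypeEquiv fun _ => Iff.rfl).trans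
      Equiv.subtypeProdEquivProd
  rw [← ENNReal.tsum_mul_right]
  simp_rw [← ENNReal.tsum_mul_left]
  rw [← ENNReal.tsum_prod (f := fun (y : {y // A y}) (z : {z // B z}) =>
    (∏ i, w (y.1 i)) * ∏ i, w (z.1 i)), ← e.tsum_eq]
  refine tsum_congr fun x => ?_
  convert (Fintype.prod_subtype_mul_prod_subtype p fun i => w (x.1 i)).symm <;> rfl

/-! ### Grouping a tuple by its primes -/

section SquarefulTuples

variable {Pr ι : Type*}

/-- Tuples of pairs `(P, k)`, standing for prime powers `P ^ k`, in which a prime occurring with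
exponent one occurs at another index as well. -/
def Squareful (x : ι → Pr × ℕ+) : Prop :=
  ∀ i, (x i).2 = 1 → ∃ j, j ≠ i ∧ (x j).1 = (x i).1

/-- The tuples of powers of a single prime. -/
def IsBlock (x : ι → Pr × ℕ+) : Prop :=
  ∀ i j, (x i).1 = (x j).1

/-- The total weight of the squareful tuples indexed by `ι`. -/
noncomputable def tupleSum (w : Pr × ℕ+ → ℝ≥0∞) (ι : Type*) [Fintype ι] : ℝ≥0∞ :=
  ∑' x : {x : ι → Pr × ℕ+ // Squareful x}, ∏ i, w (x.1 i)

/-- The total weight of the squareful `b`-tuples of powers of a single prime: the constraint only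
matters for `b = 1`, where it excludes the exponent one. -/
noncomputable def blockSum (w : Pr × ℕ+ → ℝ≥0∞) (b : ℕ) : ℝ≥0∞ :=
  ∑' P, (∑' k : ℕ+, if b = 1 ∧ k = 1 then 0 else w (P, k)) ^ b

theorem tupleSum_of_isEmpty (w : Pr × ℕ+ → ℝ≥0∞) (ι : Type*) [Fintype ι] [IsEmpty ι] :
    tupleSum w ι = 1 := by
  have : Unique {x : ι → Pr × ℕ+ // Squareful x} :=
    ⟨⟨⟨isEmptyElim, isEmptyElim⟩⟩, fun _ => Subsingleton.elim _ _⟩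
  simp [tupleSum, tsum_fintype]

theorem tupleSum_congr (w : Pr × ℕ+ → ℝ≥0∞) {ι κ : Type*} [Fintype ι] [Fintype κ] (e : ι ≃ κ) :
    tupleSum w ι = tupleSum w κ := by
  have squareful_iff (x : ι → Pr × ℕ+) : Squareful x ↔ Squareful (x ∘ e.symm) := by
    simp only [Squareful, e.symm.forall_congr_left, e.symm.exists_congr_left, Function.comp_apply,
      Equiv.symm_symm, Equiv.symm_apply_apply, ne_eq, EmbeddingLike.apply_eq_iff_eq]
  rw [tupleSum, tupleSum, ← ((e.arrowCongr (Equiv.refl _)).subtypeEquiv squareful_iff).tsum_eq]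
  refine tsum_congr fun x => ?_
  rw [← e.symm.prod_comp]
  rfl

theorem tsum_squareful_block_le [Fintype ι] [Nonempty ι] (w : Pr × ℕ+ → ℝ≥0∞) :
    ∑' x : {x : ι → Pr × ℕ+ // Squareful x ∧ IsBlock x}, ∏ i, w (x.1 i) ≤
      blockSum w (Fintype.card ι) := by
  obtain ⟨i₀⟩ := ‹Nonempty ι›
  let primeAndExponents (x : {x : ι → Pr × ℕ+ // Squareful x ∧ IsBlock x}) : Pr × (ι → ℕ+) :=
    ((x.1 i₀).1, fun i => (x.1 i).2)
  have injective : Function.Injective primeAndExponents := by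
    intro x y h
    obtain ⟨hP, hk⟩ := Prod.ext_iff.1 h
    refine Subtype.ext (funext fun i => Prod.ext ?_ (congrFun hk i))
    exact (x.2.2 i i₀).trans (hP.trans (y.2.2 i₀ i))
  simp only [blockSum, ← tsum_pi_prod]
  rw [← ENNReal.tsum_prod]
  refine le_trans (ENNReal.tsum_le_tsum fun x => ?_)
    (ENNReal.tsum_comp_le_tsum_of_injective injective _)
  refine Finset.prod_le_prod' fun i _ => ?_
  have not_single : ¬ (Fintype.card ι = 1 ∧ (x.1 i).2 = 1) := by
    rintro ⟨hcard, hk⟩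
    obtain ⟨j, hj, -⟩ := x.2.1 i hk
    exact hj (Fintype.card_le_one_iff.1 hcard.le j i)
  rw [if_neg not_single, ← x.2.2 i i₀]

/-- The sum over `s` runs over the possible sets of indices not carrying the prime of `i₀`. -/
theorem tupleSum_le_sum_powerset [Fintype ι] [DecidableEq ι] (w : Pr × ℕ+ → ℝ≥0∞) (i₀ : ι) :
    tupleSum w ι ≤ ∑ s ∈ (Finset.univ.erase i₀).powerset,
      tupleSum w {i // i ∈ s} * blockSum w (Fintype.card {i // i ∉ s}) := by
  let weight (x : ι → Pr × ℕ+) : ℝ≥0∞ := ∏ i, w (x i)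
  let splitAlong (s : Finset ι) : Set (ι → Pr × ℕ+) :=
    {x | Squareful (fun i : {i // i ∈ s} => x i) ∧
      Squareful (fun i : {i // i ∉ s} => x i) ∧ IsBlock (fun i : {i // i ∉ s} => x i)}
  have subset_biUnion : {x | Squareful x} ⊆
      ⋃ s ∈ (Finset.univ.erase i₀).powerset, splitAlong s := by
    classical
    intro x hx
    let s : Finset ι := {i | (x i).1 ≠ (x i₀).1}
    have mem_s (i : ι) : i ∈ s ↔ (x i).1 ≠ (x i₀).1 := by simp [s]
    have notMem_s (i : ι) : i ∉ s ↔ (x i).1 = (x i₀).1 := by simp [s]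
    refine Set.mem_biUnion (x := s) ?_ ⟨fun i hi => ?_, fun i hi => ?_, fun i j => ?_⟩
    · exact Finset.mem_powerset.2 (Finset.subset_erase.2 ⟨s.subset_univ, (notMem_s i₀).2 rfl⟩)
    · obtain ⟨j, hj, hP⟩ := hx i hi
      exact ⟨⟨j, (mem_s j).2 (hP ▸ (mem_s i).1 i.2)⟩, fun h => hj (congrArg Subtype.val h), hP⟩
    · obtain ⟨j, hj, hP⟩ := hx i hi
      exact ⟨⟨j, (notMem_s j).2 (hP.trans ((notMem_s i).1 i.2))⟩,
        fun h => hj (congrArg Subtype.val h), hP⟩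
    · exact ((notMem_s i).1 i.2).trans ((notMem_s j).1 j.2).symm
  calc tupleSum w ι
    _ ≤ ∑' x : ⋃ s ∈ (Finset.univ.erase i₀).powerset, splitAlong s, weight x.1 :=
        ENNReal.tsum_mono_subtype weight subset_biUnion
    _ ≤ ∑ s ∈ (Finset.univ.erase i₀).powerset, ∑' x : splitAlong s, weight x.1 :=
        ENNReal.tsum_biUnion_le weight _ _
    _ ≤ _ := by
        refine Finset.sum_le_sum fun s hs => ?_
        have : Nonempty {i // i ∉ s} :=
          ⟨i₀, (Finset.subset_erase.1 (Finset.mem_powerset.1 hs)).2⟩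
        refine (tsum_pi_split (· ∈ s) Squareful
          (fun z => Squareful z ∧ IsBlock z) w).trans_le ?_
        exact mul_le_mul_right (tsum_squareful_block_le w) _

theorem tupleSum_succ_le (w : Pr × ℕ+ → ℝ≥0∞) (n : ℕ) :
    tupleSum w (Fin (n + 1)) ≤ ∑ cb ∈ antidiagonal n,
      n.choose cb.1 * (tupleSum w (Fin cb.1) * blockSum w (cb.2 + 1)) := by
  have card_erase : (Finset.univ.erase (0 : Fin (n + 1))).card = n := by simp
  have term_eq : ∀ s ∈ (Finset.univ.erase (0 : Fin (n + 1))).powerset,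
      tupleSum w {i // i ∈ s} * blockSum w (Fintype.card {i // i ∉ s}) =
        tupleSum w (Fin s.card) * blockSum w (n - s.card + 1) := by
    intro s hs
    have hcard : s.card ≤ n := (Finset.card_le_card (Finset.mem_powerset.1 hs)).trans_eq card_erase
    rw [tupleSum_congr w s.equivFin, Fintype.card_subtype_compl, Fintype.card_fin,
      Fintype.card_coe, Nat.sub_add_comm hcard]
  refine (tupleSum_le_sum_powerset w 0).trans_eq ?_
  rw [Finset.sum_congr rfl term_eq, Finset.sum_powerset_apply_card
    (fun c => tupleSum w (Fin c) * blockSum w (n - c + 1)), card_erase,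
    Finset.Nat.sum_antidiagonal_eq_sum_range_succ
    (fun c b => (n.choose c : ℝ≥0∞) * (tupleSum w (Fin c) * blockSum w (b + 1)))]
  simp only [nsmul_eq_mul, Nat.succ_eq_add_one]

end SquarefulTuples

/-! ### Solving the recurrence -/

/-- The number of perfect matchings of an `n`-element set, by recursion: the last of `n + 2`
elements has `n + 1` possible partners. -/
def numPerfectMatchings : ℕ → ℕ
  | 0 => 1
  | 1 => 0
  | n + 2 => (n + 1) * numPerfectMatchings n

theorem numPerfectMatchings_two_mul_add_one (m : ℕ) : numPerfectMatchings (2 * m + 1) = 0 := by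
  induction m with
  | zero => rfl
  | succ m ih => rw [mul_add_one, add_right_comm, numPerfectMatchings, ih, mul_zero]

theorem numPerfectMatchings_two_mul (m : ℕ) :
    numPerfectMatchings (2 * m) * (2 ^ m * m.factorial) = (2 * m).factorial := by
  induction m with
  | zero => rfl
  | succ m ih =>
    rw [mul_add_one, numPerfectMatchings, Nat.factorial_succ (2 * m + 1),
      Nat.factorial_succ (2 * m), ← ih, Nat.factorial_succ m]
    ring

theorem numPerfectMatchings_succ (n : ℕ) :
    numPerfectMatchings (n + 1) = ∑ cb ∈ antidiagonal n,
      n.choose cb.1 * (numPerfectMatchings cb.1 * if cb.2 = 1 then 1 else 0) := by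
  rcases n with _ | n
  · rfl
  · rw [Finset.sum_eq_single_of_mem (n, 1) (by simp)]
    · simp [numPerfectMatchings]
    · rintro ⟨c, b⟩ hcb hne
      have : b ≠ 1 := by rintro rfl; simp_all
      simp [this]

theorem mul_le_of_le_leading_add {v x y A B D E : ℝ≥0∞} {a b : ℕ} (hv : v ≤ 1)
    (hx : x ≤ A * v ^ a + D * v ^ (a + 1)) (hy : y ≤ B * v ^ b + E * v ^ (b + 1)) :
    x * y ≤ A * B * v ^ (a + b) + (A * E + D * B + D * E) * v ^ (a + b + 1) := by
  calc x * y ≤ (A * v ^ a + D * v ^ (a + 1)) * (B * v ^ b + E * v ^ (b + 1)) := by gcongr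
    _ = A * B * v ^ (a + b) + (A * E + D * B + D * E * v) * v ^ (a + b + 1) := by ring
    _ ≤ A * B * v ^ (a + b) + (A * E + D * B + D * E * 1) * v ^ (a + b + 1) := by gcongr
    _ = _ := by rw [mul_one]

theorem exists_le_numPerfectMatchings_of_recurrence (K : ℕ → ℕ) (n : ℕ) :
    ∃ D : ℕ, ∀ (v : ℝ≥0∞) (T β : ℕ → ℝ≥0∞), v ≤ 1 → T 0 ≤ 1 →
      (∀ n, T (n + 1) ≤ ∑ cb ∈ antidiagonal n,
        n.choose cb.1 * (T cb.1 * β (cb.2 + 1))) →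
      (∀ b, β (b + 1) ≤ (if b = 1 then 1 else 0) * v ^ (b + 1) + K b * v ^ (b + 2)) →
      T n ≤ numPerfectMatchings n * v ^ n + D * v ^ (n + 1) := by
  induction n using Nat.strong_induction_on with
  | _ n ih =>
  rcases n with _ | n
  · exact ⟨0, fun v T β _ hT0 _ _ => by simpa [numPerfectMatchings] using hT0⟩
  choose! D hD using ih
  let δ (b : ℕ) : ℕ := if b = 1 then 1 else 0
  let E (cb : ℕ × ℕ) : ℕ :=
    numPerfectMatchings cb.1 * K cb.2 + D cb.1 * δ cb.2 + D cb.1 * K cb.2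
  refine ⟨∑ cb ∈ antidiagonal n, n.choose cb.1 * E cb, fun v T β hv hT0 hrec hβ => ?_⟩
  have term_le : ∀ cb ∈ antidiagonal n, T cb.1 * β (cb.2 + 1) ≤
      numPerfectMatchings cb.1 * δ cb.2 * v ^ (n + 1) + E cb * v ^ (n + 2) := by
    rintro ⟨c, b⟩ hcb
    obtain rfl : c + b = n := mem_antidiagonal.1 hcb
    simpa [E, δ, add_assoc] using
      mul_le_of_le_leading_add hv (hD c (by omega) v T β hv hT0 hrec hβ) (hβ b)
  calc T (n + 1)
    _ ≤ ∑ cb ∈ antidiagonal n, n.choose cb.1 * (T cb.1 * β (cb.2 + 1)) := hrec n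
    _ ≤ ∑ cb ∈ antidiagonal n, n.choose cb.1 *
          (numPerfectMatchings cb.1 * δ cb.2 * v ^ (n + 1) + E cb * v ^ (n + 2)) := by
        gcongr with cb hcb
        exact term_le cb hcb
    _ = _ := by
        rw [numPerfectMatchings_succ]
        push_cast [δ, Finset.sum_mul, ← Finset.sum_add_distrib]
        exact Finset.sum_congr rfl fun _ _ => by ring

/-! ### The weight of a block -/

section PowerWeights

variable {Pr : Type*} {t : Pr → ℝ≥0∞}

theorem tsum_pow_add_le {r : ℝ≥0∞} (hr : r ≤ 2⁻¹) (m : ℕ) : ∑' k, r ^ (k + m) ≤ 2 * r ^ m := by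
  have inv_le_two : (1 - r)⁻¹ ≤ 2 := by
    rw [ENNReal.inv_le_iff_inv_le, ← ENNReal.one_sub_inv_two]
    exact tsub_le_tsub_left hr 1
  simp only [pow_add, ENNReal.tsum_mul_right, ENNReal.tsum_geometric]
  gcongr

theorem tsum_pow_add_one_le {r : ℝ≥0∞} (hr : r ≤ 2⁻¹) :
    ∑' k, r ^ (k + 1) ≤ r + 2 * r ^ 2 := by
  rw [tsum_eq_zero_add' ENNReal.summable, zero_add, pow_one]
  gcongr
  exact tsum_pow_add_le hr 2

/-- The weight `t P ^ k` of the prime power `P ^ k`. -/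
noncomputable def powWeight (t : Pr → ℝ≥0∞) (x : Pr × ℕ+) : ℝ≥0∞ :=
  t x.1 ^ (x.2 : ℕ)

theorem blockSum_powWeight_one_le (ht : ∀ P, t P ≤ 2⁻¹) :
    blockSum (powWeight t) 1 ≤ 2 * ∑' P, t P ^ 2 := by
  rw [blockSum, ← ENNReal.tsum_mul_left]
  refine ENNReal.tsum_le_tsum fun P => ?_
  have exponents_ge_two : ∑' k : ℕ+, (if 1 = 1 ∧ k = 1 then 0 else powWeight t (P, k)) =
      ∑' k : ℕ, t P ^ (k + 2) := by
    simp only [powWeight, true_and, ← PNat.coe_eq_one_iff]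
    rw [tsum_pnat_eq_tsum_succ (f := fun k => if k = 1 then 0 else t P ^ k),
      tsum_eq_zero_add' ENNReal.summable]
    simp
  rw [exponents_ge_two, pow_one]
  exact tsum_pow_add_le (ht P) 2

theorem blockSum_powWeight_of_ne_one {b : ℕ} (hb : b ≠ 1) :
    blockSum (powWeight t) b = ∑' P, (∑' k : ℕ, t P ^ (k + 1)) ^ b := by
  simp only [blockSum, powWeight, hb, false_and, if_false]
  exact tsum_congr fun P => by rw [tsum_pnat_eq_tsum_succ (f := fun k => t P ^ k)]

theorem blockSum_powWeight_two_le (ht : ∀ P, t P ≤ 2⁻¹) :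
    blockSum (powWeight t) 2 ≤ ∑' P, t P ^ 2 + 6 * ∑' P, t P ^ 3 := by
  rw [blockSum_powWeight_of_ne_one (by norm_num), ← ENNReal.tsum_mul_left, ← ENNReal.tsum_add]
  refine ENNReal.tsum_le_tsum fun P => ?_
  have two_mul_le_one : 2 * t P ≤ 1 := by
    simpa only [ENNReal.mul_inv_cancel two_ne_zero ENNReal.ofNat_ne_top] using
      mul_le_mul_right (ht P) 2
  calc (∑' k : ℕ, t P ^ (k + 1)) ^ 2
    _ ≤ (t P + 2 * t P ^ 2) ^ 2 := by gcongr; exact tsum_pow_add_one_le (ht P)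
    _ = t P ^ 2 + 4 * t P ^ 3 + 2 * t P ^ 3 * (2 * t P) := by ring
    _ ≤ t P ^ 2 + 4 * t P ^ 3 + 2 * t P ^ 3 * 1 := by gcongr
    _ = t P ^ 2 + 6 * t P ^ 3 := by ring

theorem blockSum_powWeight_le (ht : ∀ P, t P ≤ 2⁻¹) {b : ℕ} (hb : b ≠ 1) :
    blockSum (powWeight t) b ≤ 2 ^ b * ∑' P, t P ^ b := by
  rw [blockSum_powWeight_of_ne_one hb, ← ENNReal.tsum_mul_left]
  refine ENNReal.tsum_le_tsum fun P => ?_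
  rw [← mul_pow]
  gcongr
  simpa only [pow_one] using tsum_pow_add_le (ht P) 1

end PowerWeights

section Moments

variable (Fq : Type*) [Field Fq]

/-- The monic irreducible polynomials, the primes of `Fq[X]`. -/
abbrev MonicIrreducible : Type _ :=
  {P : Fq[X] // P.Monic ∧ Irreducible P}

variable [Fintype Fq]

theorem tsum_monic_natDegree (g : ℕ → ℝ≥0∞) :
    ∑' f : {f : Fq[X] // f.Monic}, g f.1.natDegree =
      ∑' d : ℕ, (Fintype.card Fq : ℝ≥0∞) ^ d * g d := by
  have card_fiber (d : ℕ) :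
      Nonempty ({f : {f : Fq[X] // f.Monic} // f.1.natDegree = d} ≃ (Fin d → Fq)) :=
    ⟨(Equiv.subtypeSubtypeEquivSubtypeInter _ _).trans
      ((monicEquivDegreeLT d).trans (degreeLTEquiv Fq d).toEquiv)⟩
  rw [← (Equiv.sigmaFiberEquiv fun f : {f : Fq[X] // f.Monic} => f.1.natDegree).tsum_eq,
    ENNReal.tsum_sigma']
  refine tsum_congr fun d => ?_
  obtain ⟨e⟩ := card_fiber d
  calc ∑' f : {f : {f : Fq[X] // f.Monic} // f.1.natDegree = d}, g f.1.1.natDegree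
    _ = ∑' _ : {f : {f : Fq[X] // f.Monic} // f.1.natDegree = d}, g d :=
        tsum_congr fun f => by rw [f.2]
    _ = ∑' _ : Fin d → Fq, g d := e.tsum_eq fun _ => g d
    _ = (Fintype.card Fq : ℝ≥0∞) ^ d * g d := by
        simp [tsum_fintype]

theorem inv_card_le_one : (Fintype.card Fq : ℝ≥0∞)⁻¹ ≤ 1 :=
  ENNReal.inv_le_one.2 (by exact_mod_cast Fintype.card_pos (α := Fq))

theorem inv_card_pow_le_inv_two {b : ℕ} (hb : b ≠ 0) : (Fintype.card Fq : ℝ≥0∞)⁻¹ ^ b ≤ 2⁻¹ :=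
  (pow_le_of_le_one zero_le (inv_card_le_one Fq) hb).trans
    (ENNReal.inv_le_inv.2 (by exact_mod_cast Fintype.one_lt_card (α := Fq)))

variable {Fq}

/-- The inverse norm `|P|⁻¹ = q ^ (-deg P)` of a monic irreducible polynomial. -/
noncomputable def invNorm (P : MonicIrreducible Fq) : ℝ≥0∞ :=
  (Fintype.card Fq : ℝ≥0∞)⁻¹ ^ P.1.natDegree

theorem invNorm_le_inv_two (P : MonicIrreducible Fq) : invNorm P ≤ 2⁻¹ :=
  inv_card_pow_le_inv_two Fq P.2.2.natDegree_pos.ne'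

theorem tsum_invNorm_pow_le_geometric (b : ℕ) :
    ∑' P : MonicIrreducible Fq, invNorm P ^ (b + 1) ≤
      ∑' d : ℕ, ((Fintype.card Fq : ℝ≥0∞)⁻¹ ^ b) ^ (d + 1) := by
  set u : ℝ≥0∞ := (Fintype.card Fq : ℝ≥0∞)⁻¹
  have card_mul_u : (Fintype.card Fq : ℝ≥0∞) * u = 1 :=
    ENNReal.mul_inv_cancel (by simp) (ENNReal.natCast_ne_top _)
  let g (d : ℕ) : ℝ≥0∞ := if d = 0 then 0 else (u ^ d) ^ (b + 1)
  have toMonic_injective :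
      Function.Injective fun P : MonicIrreducible Fq => (⟨P.1, P.2.1⟩ : {f : Fq[X] // f.Monic}) :=
    fun P Q h => Subtype.ext (Subtype.mk.inj h)
  calc ∑' P : MonicIrreducible Fq, invNorm P ^ (b + 1)
    _ = ∑' P : MonicIrreducible Fq, g P.1.natDegree :=
        tsum_congr fun P => (if_neg P.2.2.natDegree_pos.ne').symm
    _ ≤ ∑' f : {f : Fq[X] // f.Monic}, g f.1.natDegree :=
        ENNReal.tsum_comp_le_tsum_of_injective toMonic_injective fun f => g f.1.natDegree
    _ = ∑' d : ℕ, (Fintype.card Fq : ℝ≥0∞) ^ d * g d := tsum_monic_natDegree Fq g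
    _ = ∑' d : ℕ, (Fintype.card Fq : ℝ≥0∞) ^ (d + 1) * (u ^ (d + 1)) ^ (b + 1) := by
        rw [tsum_eq_zero_add' ENNReal.summable]
        simp [g]
    _ = ∑' d : ℕ, (u ^ b) ^ (d + 1) := tsum_congr fun d => by
        rw [pow_succ (u ^ (d + 1)), mul_left_comm, ← mul_pow, card_mul_u, one_pow, mul_one,
          pow_right_comm]

theorem tsum_invNorm_pow_le {b : ℕ} (hb : b ≠ 0) :
    ∑' P : MonicIrreducible Fq, invNorm P ^ (b + 1) ≤ 2 * (Fintype.card Fq : ℝ≥0∞)⁻¹ ^ b := by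
  simpa only [pow_one] using (tsum_invNorm_pow_le_geometric b).trans
    (tsum_pow_add_le (inv_card_pow_le_inv_two Fq hb) 1)

theorem tsum_invNorm_sq_le :
    ∑' P : MonicIrreducible Fq, invNorm P ^ 2 ≤
      (Fintype.card Fq : ℝ≥0∞)⁻¹ + 2 * (Fintype.card Fq : ℝ≥0∞)⁻¹ ^ 2 := by
  simpa only [pow_one] using (tsum_invNorm_pow_le_geometric 1).trans
    (tsum_pow_add_one_le (inv_card_pow_le_inv_two Fq one_ne_zero))

theorem blockSum_invNorm_le {v : ℝ≥0∞} (hv : v ^ 2 = (Fintype.card Fq : ℝ≥0∞)⁻¹) (b : ℕ) :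
    blockSum (powWeight (invNorm (Fq := Fq))) (b + 1) ≤
      (if b = 1 then 1 else 0) * v ^ (b + 1) + (2 ^ (b + 3) : ℕ) * v ^ (b + 2) := by
  have v_le_one : v ≤ 1 :=
    (pow_le_one_iff two_ne_zero).1 (hv ▸ inv_card_le_one Fq)
  have moment_le {c : ℕ} (hc : c ≠ 0) :
      ∑' P : MonicIrreducible Fq, invNorm P ^ (c + 1) ≤ 2 * v ^ (2 * c) := by
    simpa only [pow_mul, hv] using tsum_invNorm_pow_le hc
  rcases b with _ | _ | b
  · calc blockSum (powWeight (invNorm (Fq := Fq))) 1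
      _ ≤ 2 * (2 * v ^ 2) := (blockSum_powWeight_one_le invNorm_le_inv_two).trans
          (by gcongr; exact moment_le one_ne_zero)
      _ = 4 * v ^ 2 := by ring
      _ ≤ _ := by norm_num; gcongr; norm_num
  · calc blockSum (powWeight (invNorm (Fq := Fq))) 2
      _ ≤ (v ^ 2 + 2 * (v ^ 2) ^ 2) + 6 * (2 * v ^ 4) :=
          (blockSum_powWeight_two_le invNorm_le_inv_two).trans
            (add_le_add (hv ▸ tsum_invNorm_sq_le) (by gcongr; exact moment_le two_ne_zero))
      _ = v ^ 2 + 14 * v ^ 4 := by ring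
      _ ≤ v ^ 2 + 16 * v ^ 3 := by
          refine add_le_add_right (mul_le_mul' ?_ (pow_le_pow_right_of_le_one' v_le_one ?_)) _
          all_goals norm_num
      _ = _ := by norm_num
  · calc blockSum (powWeight (invNorm (Fq := Fq))) (b + 3)
      _ ≤ 2 ^ (b + 3) * (2 * v ^ (2 * (b + 2))) :=
          (blockSum_powWeight_le invNorm_le_inv_two (by omega)).trans
            (by gcongr; exact moment_le (Nat.succ_ne_zero _))
      _ = 2 ^ (b + 4) * v ^ (2 * (b + 2)) := by ring
      _ ≤ 2 ^ (b + 5) * v ^ (b + 4) := by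
          gcongr ?_ * ?_
          · exact pow_le_pow_right₀ one_le_two (by omega)
          · exact pow_le_pow_right_of_le_one' v_le_one (by omega)
      _ = _ := by simp

theorem exists_tupleSum_invNorm_le (n : ℕ) : ∃ D : ℕ, ∀ (Fq : Type*) [Field Fq] [Fintype Fq]
    (v : ℝ≥0∞), v ^ 2 = (Fintype.card Fq : ℝ≥0∞)⁻¹ →
      tupleSum (powWeight (invNorm (Fq := Fq))) (Fin n) ≤
        numPerfectMatchings n * v ^ n + D * v ^ (n + 1) := by
  obtain ⟨D, hD⟩ := exists_le_numPerfectMatchings_of_recurrence (fun b => 2 ^ (b + 3)) n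
  refine ⟨D, fun Fq _ _ v hv => hD v
    (fun n => tupleSum (powWeight (invNorm (Fq := Fq))) (Fin n)) _ ?_
    (tupleSum_of_isEmpty _ _).le (tupleSum_succ_le _) (blockSum_invNorm_le hv)⟩
  exact (pow_le_one_iff two_ne_zero).1 (hv ▸ inv_card_le_one Fq)

end Moments

/-! ### From polynomials to prime powers -/

theorem exists_ne_dvd_of_isSquare_prod {ι M : Type*} [CommMonoidWithZero M] [IsCancelMulZero M]
    [Fintype ι] {f : ι → M} {i : ι} (hi : Prime (f i)) (hf : IsSquare (∏ j, f j)) :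
    ∃ j, j ≠ i ∧ f i ∣ f j := by
  classical
  obtain ⟨c, hc⟩ := hf
  rw [← Finset.mul_prod_erase _ f (Finset.mem_univ i)] at hc
  obtain ⟨d, rfl⟩ : f i ∣ c := or_self_iff.1 (hi.dvd_or_dvd (hc ▸ dvd_mul_right _ _))
  have dvd_rest : f i ∣ ∏ j ∈ Finset.univ.erase i, f j :=
    ⟨d * d, mul_left_cancel₀ hi.ne_zero (by rw [hc, mul_mul_mul_comm, mul_assoc])⟩
  obtain ⟨j, hj, hdvd⟩ := (hi.dvd_finsetProd_iff f).1 dvd_rest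
  exact ⟨j, Finset.ne_of_mem_erase hj, hdvd⟩

section PrimePowers

variable {Fq : Type*} [Field Fq]

/-- The polynomial `P ^ k` encoded by the pair `(P, k)`. -/
noncomputable def primePower (x : MonicIrreducible Fq × ℕ+) : Fq[X] :=
  x.1.1 ^ (x.2 : ℕ)

theorem squareful_of_isSquare {ι : Type*} [Fintype ι] {x : ι → MonicIrreducible Fq × ℕ+}
    (hx : IsSquare (∏ i, primePower (x i))) : Squareful x := by
  intro i hi
  have primePower_eq : primePower (x i) = (x i).1.1 := by rw [primePower, hi, PNat.one_coe, pow_one]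
  have prime : Prime (x i).1.1 := (x i).1.2.2.prime
  obtain ⟨j, hj, hdvd⟩ := exists_ne_dvd_of_isSquare_prod (primePower_eq.symm ▸ prime) hx
  rw [primePower_eq] at hdvd
  exact ⟨j, hj, Subtype.ext (eq_of_monic_of_associated (x i).1.2.1 (x j).1.2.1
    ((x i).1.2.2.associated_of_dvd (x j).1.2.2 (prime.dvd_of_dvd_pow hdvd))).symm⟩

theorem ofReal_inv_card_pow_natDegree_primePower [Fintype Fq] (x : MonicIrreducible Fq × ℕ+) :
    ENNReal.ofReal ((Fintype.card Fq : ℝ) ^ (primePower x).natDegree)⁻¹ =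
      powWeight invNorm x := by
  rw [primePower, natDegree_pow, mul_comm, ENNReal.ofReal_inv_of_pos (by positivity),
    ENNReal.ofReal_pow (Nat.cast_nonneg _), ENNReal.ofReal_natCast, powWeight, invNorm,
    ← pow_mul, ENNReal.inv_pow]

end PrimePowers

section VonMangoldt

variable {Fq : Type} [Field Fq]

theorem vonMangoldt_nonneg (f : Fq[X]) : 0 ≤ vonMangoldt f := by
  unfold vonMangoldt
  split_ifs <;> positivity

theorem vonMangoldt_le_natDegree (f : Fq[X]) : vonMangoldt f ≤ f.natDegree := by
  unfold vonMangoldt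
  split_ifs with h
  · obtain ⟨k, -, -, hk, hf⟩ := h.choose_spec
    conv_rhs => rw [hf, natDegree_pow]
    exact_mod_cast Nat.le_mul_of_pos_left _ hk
  · positivity

theorem exists_eq_primePower_of_vonMangoldt_ne_zero {f : Fq[X]} (h : vonMangoldt f ≠ 0) :
    ∃ x : MonicIrreducible Fq × ℕ+, f = primePower x := by
  unfold vonMangoldt at h
  split_ifs at h with h'
  · obtain ⟨P, k, hmonic, hirred, hk, rfl⟩ := h'
    exact ⟨(⟨P, hmonic, hirred⟩, ⟨k, hk⟩), rfl⟩
  · exact absurd rfl h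

theorem vonMangoldt_X_sub_C (a : Fq) : vonMangoldt (X - C a) = 1 := by
  have h : ∃ P : Fq[X], ∃ k : ℕ, P.Monic ∧ Irreducible P ∧ 1 ≤ k ∧ X - C a = P ^ k :=
    ⟨X - C a, 1, monic_X_sub_C a, irreducible_X_sub_C a, le_rfl, (pow_one _).symm⟩
  rw [vonMangoldt, dif_pos h]
  obtain ⟨k, -, -, -, hf⟩ := h.choose_spec
  have degree_eq := congrArg natDegree hf
  rw [natDegree_X_sub_C, natDegree_pow] at degree_eq
  exact_mod_cast Nat.eq_one_of_mul_eq_one_left degree_eq.symm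

end VonMangoldt

section UpperBound

variable (Fq : Type) [Field Fq]

/-- The index type of the sum `Hfun Fq s`. -/
abbrev SquareTuple (s : ℕ) : Type :=
  {f : Fin s → Fq[X] // (∀ i, (f i).Monic ∧ 0 < (f i).natDegree) ∧ IsSquare (∏ i, f i)}

variable {Fq} [Fintype Fq] {s : ℕ}

/-- The product of `(1 + |P|⁻¹)⁻¹` over the primes `P` dividing `f`. -/
noncomputable def eulerProduct (f : Fq[X]) : ℝ :=
  ∏ᶠ P ∈ {P : Fq[X] | P.Monic ∧ Irreducible P ∧ P ∣ f},
    (1 + ((Fintype.card Fq : ℝ) ^ P.natDegree)⁻¹)⁻¹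

/-- The weight `Λ(f) * |f|⁻¹ / deg f` of one entry `f` of a tuple. -/
noncomputable def mangoldtWeight (f : Fq[X]) : ℝ :=
  vonMangoldt f * ((Fintype.card Fq : ℝ) ^ f.natDegree)⁻¹ / f.natDegree

/-- The summand of `Hfun Fq s` at the tuple `f`. -/
noncomputable def summand (f : Fin s → Fq[X]) : ℝ :=
  (∏ i, mangoldtWeight (f i)) * eulerProduct (∏ i, f i)

variable (Fq s) in
theorem Hfun_eq_tsum_summand : Hfun Fq s = ∑' f : SquareTuple Fq s, summand f.1 :=
  rfl

theorem eulerProduct_mem_Icc (f : Fq[X]) : eulerProduct f ∈ Set.Icc (0 : ℝ) 1 := by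
  have mul_mem (x y : ℝ) (hx : x ∈ Set.Icc (0 : ℝ) 1) (hy : y ∈ Set.Icc (0 : ℝ) 1) :
      x * y ∈ Set.Icc (0 : ℝ) 1 := unitInterval.mul_mem hx hy
  refine finprod_induction (· ∈ Set.Icc (0 : ℝ) 1) unitInterval.one_mem mul_mem fun P => ?_
  refine finprod_induction (· ∈ Set.Icc (0 : ℝ) 1) unitInterval.one_mem mul_mem fun _ => ?_
  exact ⟨by positivity, inv_le_one_of_one_le₀ (by simp)⟩

theorem mangoldtWeight_nonneg (f : Fq[X]) : 0 ≤ mangoldtWeight f :=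
  div_nonneg (mul_nonneg (vonMangoldt_nonneg f) (by positivity)) (Nat.cast_nonneg _)

theorem mangoldtWeight_le (f : Fq[X]) :
    mangoldtWeight f ≤ ((Fintype.card Fq : ℝ) ^ f.natDegree)⁻¹ := by
  rw [mangoldtWeight, mul_div_right_comm]
  exact mul_le_of_le_one_left (by positivity)
    (div_le_one_of_le₀ (vonMangoldt_le_natDegree f) (Nat.cast_nonneg _))

theorem prod_mangoldtWeight_nonneg (f : Fin s → Fq[X]) : 0 ≤ ∏ i, mangoldtWeight (f i) :=
  Finset.prod_nonneg fun i _ => mangoldtWeight_nonneg (f i)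

theorem summand_nonneg (f : Fin s → Fq[X]) : 0 ≤ summand f :=
  mul_nonneg (prod_mangoldtWeight_nonneg f) (eulerProduct_mem_Icc _).1

theorem summand_le (f : Fin s → Fq[X]) :
    summand f ≤ ∏ i, ((Fintype.card Fq : ℝ) ^ (f i).natDegree)⁻¹ :=
  (mul_le_of_le_one_right (prod_mangoldtWeight_nonneg f) (eulerProduct_mem_Icc _).2).trans
    (Finset.prod_le_prod (fun i _ => mangoldtWeight_nonneg (f i))
      fun i _ => mangoldtWeight_le (f i))

theorem exists_eq_primePower_of_summand_ne_zero {f : Fin s → Fq[X]} (hf : summand f ≠ 0) :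
    ∃ x : Fin s → MonicIrreducible Fq × ℕ+, ∀ i, f i = primePower (x i) := by
  refine Classical.skolem.1 fun i => exists_eq_primePower_of_vonMangoldt_ne_zero fun h => ?_
  exact Finset.prod_ne_zero_iff.1 (left_ne_zero_of_mul hf) i (Finset.mem_univ i)
    (by simp [mangoldtWeight, h])

theorem tsum_ofReal_summand_le :
    ∑' f : SquareTuple Fq s, ENNReal.ofReal (summand f.1) ≤
      tupleSum (powWeight (invNorm (Fq := Fq))) (Fin s) := by
  let F (f : SquareTuple Fq s) : ℝ≥0∞ := ENNReal.ofReal (summand f.1)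
  have exists_primePower (f : Function.support F) :
      ∃ x : {x : Fin s → MonicIrreducible Fq × ℕ+ // Squareful x},
        ∀ i, f.1.1 i = primePower (x.1 i) := by
    obtain ⟨x, hx⟩ := exists_eq_primePower_of_summand_ne_zero (f := f.1.1)
      fun h => f.2 (by simp [F, h])
    exact ⟨⟨x, squareful_of_isSquare (by simpa only [hx] using f.1.2.2)⟩, hx⟩
  choose x hx using exists_primePower
  have x_injective : Function.Injective x := fun f g h =>
    Subtype.ext (Subtype.ext (funext fun i => by rw [hx, hx, h]))
  calc ∑' f, F f
    _ = ∑' f : Function.support F, F f := (tsum_subtype_support F).symm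
    _ ≤ ∑' f : Function.support F, ∏ i, powWeight invNorm ((x f).1 i) :=
        ENNReal.tsum_le_tsum fun f => by
          refine (ENNReal.ofReal_le_ofReal (summand_le f.1.1)).trans_eq ?_
          rw [ENNReal.ofReal_prod_of_nonneg fun _ _ => by positivity]
          simp only [hx, ofReal_inv_card_pow_natDegree_primePower]
    _ ≤ tupleSum (powWeight invNorm) (Fin s) :=
        ENNReal.tsum_comp_le_tsum_of_injective x_injective _

theorem exists_tsum_ofReal_summand_le (s : ℕ) : ∃ D : ℕ, ∀ (Fq : Type) [Field Fq] [Fintype Fq]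
    (v : ℝ), 0 ≤ v → v ^ 2 = (Fintype.card Fq : ℝ)⁻¹ →
      ∑' f : SquareTuple Fq s, ENNReal.ofReal (summand f.1) ≤
        ENNReal.ofReal (numPerfectMatchings s * v ^ s + D * v ^ (s + 1)) := by
  obtain ⟨D, hD⟩ := exists_tupleSum_invNorm_le s
  refine ⟨D, fun Fq _ _ v hv hv_sq => tsum_ofReal_summand_le.trans ?_⟩
  have ofReal_sq : ENNReal.ofReal v ^ 2 = (Fintype.card Fq : ℝ≥0∞)⁻¹ := by
    rw [← ENNReal.ofReal_pow hv, hv_sq, ENNReal.ofReal_inv_of_pos (by positivity),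
      ENNReal.ofReal_natCast]
  rw [ENNReal.ofReal_add (by positivity) (by positivity), ENNReal.ofReal_mul (by positivity),
    ENNReal.ofReal_mul (by positivity), ENNReal.ofReal_pow hv, ENNReal.ofReal_pow hv,
    ENNReal.ofReal_natCast, ENNReal.ofReal_natCast]
  exact hD Fq _ ofReal_sq

variable (Fq s) in
theorem summable_summand : Summable fun f : SquareTuple Fq s => summand f.1 := by
  obtain ⟨D, hD⟩ := exists_tsum_ofReal_summand_le s
  have tsum_ne_top := ne_top_of_le_ne_top ENNReal.ofReal_ne_top
    (hD Fq √(Fintype.card Fq : ℝ)⁻¹ (Real.sqrt_nonneg _) (Real.sq_sqrt (by positivity)))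
  simpa only [ENNReal.toReal_ofReal (summand_nonneg _)] using
    ENNReal.summable_toReal tsum_ne_top

theorem exists_Hfun_le (s : ℕ) : ∃ D : ℕ, ∀ (Fq : Type) [Field Fq] [Fintype Fq]
    (v : ℝ), 0 ≤ v → v ^ 2 = (Fintype.card Fq : ℝ)⁻¹ →
      Hfun Fq s ≤ numPerfectMatchings s * v ^ s + D * v ^ (s + 1) := by
  obtain ⟨D, hD⟩ := exists_tsum_ofReal_summand_le s
  refine ⟨D, fun Fq _ _ v hv hv_sq => ?_⟩
  rw [Hfun_eq_tsum_summand, ← ENNReal.ofReal_le_ofReal_iff (by positivity),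
    ENNReal.ofReal_tsum_of_nonneg (fun _ => summand_nonneg _) (summable_summand Fq s)]
  exact hD Fq v hv hv_sq

variable (Fq s) in
theorem Hfun_nonneg : 0 ≤ Hfun Fq s :=
  tsum_nonneg fun f : SquareTuple Fq s => summand_nonneg f.1

end UpperBound

/-! ### The lower bound from linear polynomials -/

section InsertPair

variable {α : Type*} {n : ℕ}

/-- The tuple obtained from `g` by inserting `a` both at the front and at position `j` of the
remaining entries. -/
def insertPair (a : α) (j : Fin (n + 1)) (g : Fin n → α) : Fin (n + 2) → α :=
  Fin.cons a (j.insertNth (α := fun _ => α) a g : Fin (n + 1) → α)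

theorem prod_insertPair {M : Type*} [CommMonoid M] (h : α → M) (a : α) (j : Fin (n + 1))
    (g : Fin n → α) : ∏ i, h (insertPair a j g i) = h a * h a * ∏ i, h (g i) := by
  simp [insertPair, Fin.prod_univ_succ (n := n + 1), Fin.prod_univ_succAbove _ j, mul_assoc]

theorem insertPair_inj {a a' : α} {j j' : Fin (n + 1)} {g g' : Fin n → α} (ha' : ∀ i, g' i ≠ a')
    (h : insertPair a j g = insertPair a' j' g') : a = a' ∧ j = j' ∧ g = g' := by
  obtain ⟨rfl, h_tail⟩ := (Fin.cons_inj (α := fun _ => α)).1 h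
  obtain rfl : j = j' := by
    by_contra hne
    obtain ⟨i, rfl⟩ := Fin.exists_succAbove_eq hne
    exact ha' i (by simpa using (congrFun h_tail (j'.succAbove i)).symm)
  exact ⟨rfl, rfl, Fin.insertNth_right_injective _ h_tail⟩

end InsertPair

theorem one_sub_inv_le_inv_one_add_inv_pow {q : ℝ} (hq : 1 ≤ q) {d : ℕ} (hd : d ≠ 0) :
    1 - q⁻¹ ≤ (1 + (q ^ d)⁻¹)⁻¹ := by
  calc 1 - q⁻¹
    _ ≤ 1 - (q ^ d)⁻¹ := by
        gcongr
        exact le_self_pow₀ hq hd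
    _ ≤ (1 + (q ^ d)⁻¹)⁻¹ := by
        rw [← one_div (1 + _), le_div_iff₀ (by positivity)]
        nlinarith [sq_nonneg (q ^ d)⁻¹]

theorem inv_pow_mul_one_sub_le {q a : ℝ} (hq : 0 < q) (ha : a ≤ q) (m : ℕ) :
    q⁻¹ ^ m * (1 - (m + 1) * a * q⁻¹) ≤ (q - a) ^ m * (q⁻¹ ^ (2 * m) * (1 - a * q⁻¹)) := by
  have one_sub_eq : 1 - a * q⁻¹ = (q - a) * q⁻¹ := by rw [sub_mul, mul_inv_cancel₀ hq.ne']
  have one_sub_nonneg : 0 ≤ 1 - a * q⁻¹ :=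
    one_sub_eq ▸ mul_nonneg (sub_nonneg.2 ha) (inv_nonneg.2 hq.le)
  have bernoulli : 1 + (m + 1 : ℕ) * -(a * q⁻¹) ≤ (1 + -(a * q⁻¹)) ^ (m + 1) :=
    one_add_mul_le_pow (by linarith) _
  calc q⁻¹ ^ m * (1 - (m + 1) * a * q⁻¹)
    _ = q⁻¹ ^ m * (1 + (m + 1 : ℕ) * -(a * q⁻¹)) := by push_cast; ring
    _ ≤ q⁻¹ ^ m * (1 - a * q⁻¹) ^ (m + 1) := by rw [sub_eq_add_neg]; gcongr
    _ = (q - a) ^ m * (q⁻¹ ^ (2 * m) * (1 - a * q⁻¹)) := by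
        rw [pow_succ, one_sub_eq, mul_pow]
        ring

section LinearPolynomials

variable (Fq : Type) [Field Fq] [Fintype Fq]

open Classical in
/-- The tuples `g` of field elements for which the product of the linear polynomials `X - g i` is
a square. -/
noncomputable def linearSquareTuples (n : ℕ) : Finset (Fin n → Fq) :=
  {g | IsSquare (∏ i, (X - C (g i)))}

theorem mem_linearSquareTuples {n : ℕ} (g : Fin n → Fq) :
    g ∈ linearSquareTuples Fq n ↔ IsSquare (∏ i, (X - C (g i))) := by
  simp [linearSquareTuples]

theorem card_linearSquareTuples_add_two (n : ℕ) :
    (n + 1) * (Fintype.card Fq - n) * (linearSquareTuples Fq n).card ≤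
      (linearSquareTuples Fq (n + 2)).card := by
  classical
  let insertions (g : Fin n → Fq) : Finset (Fin (n + 1) × Fq) :=
    Finset.univ ×ˢ (Finset.univ.image g)ᶜ
  have le_card_insertions (g : Fin n → Fq) :
      (n + 1) * (Fintype.card Fq - n) ≤ (insertions g).card := by
    rw [Finset.card_product, Finset.card_fin, Finset.card_compl]
    gcongr
    exact Finset.card_image_le.trans_eq (Finset.card_fin n)
  calc (n + 1) * (Fintype.card Fq - n) * (linearSquareTuples Fq n).card
    _ ≤ ∑ g ∈ linearSquareTuples Fq n, (insertions g).card := by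
        rw [mul_comm]
        exact Finset.card_nsmul_le_sum _ _ _ fun g _ => le_card_insertions g
    _ = ((linearSquareTuples Fq n).sigma insertions).card := (Finset.card_sigma _ _).symm
    _ ≤ (linearSquareTuples Fq (n + 2)).card := by
        refine Finset.card_le_card_of_injOn (fun x => insertPair x.2.2 x.2.1 x.1) ?_ ?_
        · rintro ⟨g, j, a⟩ hx
          have hg := (mem_linearSquareTuples Fq g).1 (Finset.mem_sigma.1 hx).1
          rw [Finset.mem_coe, mem_linearSquareTuples, prod_insertPair fun b => X - C b]
          exact (IsSquare.mul_self (X - C a)).mul hg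
        · rintro ⟨g, j, a⟩ - ⟨g', j', a'⟩ hx' h
          have ha' : ∀ i, g' i ≠ a' := by simp_all [insertions]
          obtain ⟨rfl, rfl, rfl⟩ := insertPair_inj ha' h
          rfl

theorem numPerfectMatchings_mul_pow_le_card (n : ℕ) :
    numPerfectMatchings n * (Fintype.card Fq - n) ^ (n / 2) ≤ (linearSquareTuples Fq n).card := by
  induction n using Nat.twoStepInduction with
  | zero => simp [numPerfectMatchings, Finset.Nonempty, mem_linearSquareTuples]
  | one => simp [numPerfectMatchings]
  | more n ih _ =>
    calc numPerfectMatchings (n + 2) * (Fintype.card Fq - (n + 2)) ^ ((n + 2) / 2)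
      _ ≤ (n + 1) * numPerfectMatchings n * (Fintype.card Fq - n) ^ (n / 2 + 1) := by
          rw [numPerfectMatchings, Nat.add_div_right n two_pos]
          gcongr
          omega
      _ = (n + 1) * (Fintype.card Fq - n) *
            (numPerfectMatchings n * (Fintype.card Fq - n) ^ (n / 2)) := by ring
      _ ≤ (n + 1) * (Fintype.card Fq - n) * (linearSquareTuples Fq n).card := by gcongr
      _ ≤ (linearSquareTuples Fq (n + 2)).card := card_linearSquareTuples_add_two Fq n

theorem one_sub_mul_inv_card_le_eulerProduct {ι : Type*} [Fintype ι] {f : ι → Fq[X]}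
    (hmonic : ∀ i, (f i).Monic) (hirred : ∀ i, Irreducible (f i)) :
    1 - Fintype.card ι * (Fintype.card Fq : ℝ)⁻¹ ≤ eulerProduct (∏ i, f i) := by
  classical
  have primes_eq : {P : Fq[X] | P.Monic ∧ Irreducible P ∧ P ∣ ∏ i, f i} =
      (Finset.univ.image f : Finset Fq[X]) := by
    ext P
    rw [Finset.coe_image, Finset.coe_univ, Set.image_univ]
    constructor
    · rintro ⟨hP, hP', hdvd⟩
      obtain ⟨i, -, hi⟩ := (hP'.prime.dvd_finsetProd_iff f).1 hdvd
      exact ⟨i, (eq_of_monic_of_associated hP (hmonic i)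
        (hP'.associated_of_dvd (hirred i) hi)).symm⟩
    · rintro ⟨i, rfl⟩
      exact ⟨hmonic i, hirred i, Finset.dvd_prod_of_mem f (Finset.mem_univ i)⟩
  have one_le_card : (1 : ℝ) ≤ Fintype.card Fq := by exact_mod_cast Fintype.card_pos
  have inv_card_le_one : (Fintype.card Fq : ℝ)⁻¹ ≤ 1 :=
    inv_le_one_of_one_le₀ one_le_card
  have inv_card_nonneg : 0 ≤ (Fintype.card Fq : ℝ)⁻¹ := by positivity
  rw [eulerProduct, primes_eq, finprod_mem_coe_finset]
  calc 1 - Fintype.card ι * (Fintype.card Fq : ℝ)⁻¹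
    _ = 1 + Fintype.card ι * (-(Fintype.card Fq : ℝ)⁻¹) := by ring
    _ ≤ (1 + -(Fintype.card Fq : ℝ)⁻¹) ^ Fintype.card ι :=
        one_add_mul_le_pow (by linarith) _
    _ = (1 - (Fintype.card Fq : ℝ)⁻¹) ^ Fintype.card ι := by rw [sub_eq_add_neg]
    _ ≤ (1 - (Fintype.card Fq : ℝ)⁻¹) ^ (Finset.univ.image f).card :=
        pow_le_pow_of_le_one (by linarith) (by linarith) Finset.card_image_le
    _ = ∏ _P ∈ Finset.univ.image f, (1 - (Fintype.card Fq : ℝ)⁻¹) := Finset.prod_const _ |>.symm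
    _ ≤ ∏ P ∈ Finset.univ.image f, (1 + ((Fintype.card Fq : ℝ) ^ P.natDegree)⁻¹)⁻¹ := by
        refine Finset.prod_le_prod (fun _ _ => by linarith) fun P hP =>
          one_sub_inv_le_inv_one_add_inv_pow one_le_card ?_
        obtain ⟨i, -, rfl⟩ := Finset.mem_image.1 hP
        exact (hirred i).natDegree_pos.ne'

theorem card_mul_le_Hfun (n : ℕ) :
    (linearSquareTuples Fq n).card *
      ((Fintype.card Fq : ℝ)⁻¹ ^ n * (1 - n * (Fintype.card Fq : ℝ)⁻¹)) ≤ Hfun Fq n := by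
  let toSquareTuple (g : linearSquareTuples Fq n) : SquareTuple Fq n :=
    ⟨fun i => X - C (g.1 i), fun i => ⟨monic_X_sub_C _, by simp⟩,
      (mem_linearSquareTuples Fq g.1).1 g.2⟩
  have injective : Function.Injective toSquareTuple := fun g h hgh =>
    Subtype.ext (funext fun i => by simpa using congrFun (Subtype.mk.inj hgh) i)
  calc (linearSquareTuples Fq n).card *
      ((Fintype.card Fq : ℝ)⁻¹ ^ n * (1 - n * (Fintype.card Fq : ℝ)⁻¹))
    _ = ∑ _g : linearSquareTuples Fq n,
          (Fintype.card Fq : ℝ)⁻¹ ^ n * (1 - n * (Fintype.card Fq : ℝ)⁻¹) := by simp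
    _ ≤ ∑ g : linearSquareTuples Fq n, summand (toSquareTuple g).1 := by
        refine Finset.sum_le_sum fun g _ => ?_
        have := one_sub_mul_inv_card_le_eulerProduct Fq (fun i => monic_X_sub_C (g.1 i))
          fun i => irreducible_X_sub_C (g.1 i)
        rw [Fintype.card_fin] at this
        simpa [summand, mangoldtWeight, toSquareTuple, vonMangoldt_X_sub_C] using
          mul_le_mul_of_nonneg_left this (by positivity)
    _ = ∑' g, summand (toSquareTuple g).1 := (tsum_fintype _).symm
    _ ≤ Hfun Fq n := tsum_comp_le_tsum_of_inj (summable_summand Fq n)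
        (fun f => summand_nonneg f.1) injective

theorem le_Hfun_two_mul (m : ℕ) :
    numPerfectMatchings (2 * m) *
      ((Fintype.card Fq : ℝ)⁻¹ ^ m * (1 - (m + 1) * (2 * m) * (Fintype.card Fq : ℝ)⁻¹)) ≤
        Hfun Fq (2 * m) := by
  set q := Fintype.card Fq
  have q_pos : (0 : ℝ) < q := by exact_mod_cast Fintype.card_pos
  rcases le_total (2 * m) q with hm | hm
  · have one_sub_nonneg : 0 ≤ 1 - 2 * m * (q : ℝ)⁻¹ := by
      rw [sub_nonneg, ← div_eq_mul_inv, div_le_one q_pos]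
      exact_mod_cast hm
    have card_ge : numPerfectMatchings (2 * m) * (q - 2 * m : ℝ) ^ m ≤
        (linearSquareTuples Fq (2 * m)).card := by
      have := numPerfectMatchings_mul_pow_le_card Fq (2 * m)
      rw [Nat.mul_div_cancel_left m two_pos] at this
      exact_mod_cast this
    calc numPerfectMatchings (2 * m) * ((q : ℝ)⁻¹ ^ m * (1 - (m + 1) * (2 * m) * (q : ℝ)⁻¹))
      _ ≤ numPerfectMatchings (2 * m) *
            ((q - 2 * m) ^ m * ((q : ℝ)⁻¹ ^ (2 * m) * (1 - 2 * m * (q : ℝ)⁻¹))) :=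
          mul_le_mul_of_nonneg_left (inv_pow_mul_one_sub_le q_pos (by exact_mod_cast hm) m)
            (Nat.cast_nonneg _)
      _ = numPerfectMatchings (2 * m) * (q - 2 * m) ^ m *
            ((q : ℝ)⁻¹ ^ (2 * m) * (1 - 2 * m * (q : ℝ)⁻¹)) := (mul_assoc _ _ _).symm
      _ ≤ (linearSquareTuples Fq (2 * m)).card *
            ((q : ℝ)⁻¹ ^ (2 * m) * (1 - 2 * m * (q : ℝ)⁻¹)) := by gcongr
      _ ≤ Hfun Fq (2 * m) := by exact_mod_cast card_mul_le_Hfun Fq (2 * m)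
  · have one_le : 1 ≤ 2 * m * (q : ℝ)⁻¹ := by
      rw [← div_eq_mul_inv, one_le_div q_pos]
      exact_mod_cast hm
    have one_sub_nonpos : 1 - (m + 1) * (2 * m) * (q : ℝ)⁻¹ ≤ 0 := by
      rw [mul_assoc, sub_nonpos]
      exact one_le_mul_of_one_le_of_one_le (by simp) one_le
    exact (mul_nonpos_of_nonneg_of_nonpos (by positivity)
      (mul_nonpos_of_nonneg_of_nonpos (by positivity) one_sub_nonpos)).trans (Hfun_nonneg Fq _)

end LinearPolynomials

theorem exists_sub_le_Hfun (s : ℕ) : ∃ C : ℝ, 0 ≤ C ∧ ∀ (Fq : Type) [Field Fq] [Fintype Fq]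
    (v : ℝ), 0 ≤ v → v ^ 2 = (Fintype.card Fq : ℝ)⁻¹ →
      numPerfectMatchings s * v ^ s - C * v ^ (s + 1) ≤ Hfun Fq s := by
  obtain ⟨m, rfl | rfl⟩ := s.even_or_odd'
  · refine ⟨numPerfectMatchings (2 * m) * ((m + 1) * (2 * m)), by positivity,
      fun Fq _ _ v hv hv_sq => le_trans ?_ (le_Hfun_two_mul Fq m)⟩
    have v_le_one : v ≤ 1 := (pow_le_one_iff_of_nonneg hv two_ne_zero).1
      (hv_sq ▸ inv_le_one_of_one_le₀ (by exact_mod_cast Fintype.card_pos))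
    have pow_le : v ^ (2 * m + 2) ≤ v ^ (2 * m + 1) :=
      pow_le_pow_of_le_one hv v_le_one (Nat.le_succ _)
    rw [← hv_sq, ← pow_mul]
    calc numPerfectMatchings (2 * m) * v ^ (2 * m) -
          numPerfectMatchings (2 * m) * ((m + 1) * (2 * m)) * v ^ (2 * m + 1)
      _ ≤ numPerfectMatchings (2 * m) * v ^ (2 * m) -
            numPerfectMatchings (2 * m) * ((m + 1) * (2 * m)) * v ^ (2 * m + 2) := by gcongr
      _ = numPerfectMatchings (2 * m) * (v ^ (2 * m) * (1 - (m + 1) * (2 * m) * v ^ 2)) := by ring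
  · refine ⟨0, le_rfl, fun Fq _ _ v _ _ => ?_⟩
    simpa [numPerfectMatchings_two_mul_add_one] using Hfun_nonneg Fq (2 * m + 1)

theorem exists_abs_Hfun_sub_le (s : ℕ) : ∃ C : ℝ, 0 < C ∧
    ∀ (Fq : Type) [Field Fq] [Fintype Fq] (v : ℝ), 0 ≤ v → v ^ 2 = (Fintype.card Fq : ℝ)⁻¹ →
      |Hfun Fq s - numPerfectMatchings s * v ^ s| ≤ C * v ^ (s + 1) := by
  obtain ⟨D, hD⟩ := exists_Hfun_le s
  obtain ⟨C, hC, hlower⟩ := exists_sub_le_Hfun s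
  refine ⟨D + C + 1, by positivity, fun Fq _ _ v hv hv_sq => ?_⟩
  have := hD Fq v hv hv_sq
  have := hlower Fq v hv hv_sq
  have : 0 ≤ v ^ (s + 1) := by positivity
  have : 0 ≤ D * v ^ (s + 1) := by positivity
  have : 0 ≤ C * v ^ (s + 1) := by positivity
  exact abs_sub_le_iff.2 ⟨by linarith, by linarith⟩

theorem rpow_neg_one_half_pow {q : ℝ} (hq : 0 ≤ q) (n : ℕ) :
    (q ^ (-1 / 2 : ℝ)) ^ n = q ^ (-(n : ℝ) / 2) := by
  rw [← Real.rpow_mul_natCast hq]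
  ring_nf

end Hfun

/-- For every positive integer `s` there is a constant `C_s > 0` such that for every
prime power `q` (realized as the cardinality of a finite field `Fq`): if `s` is even then
`|H(s) - (s!/(2^(s/2) (s/2)!)) q^(-s/2)| ≤ C_s q^(-(s+1)/2)`, and if `s` is odd then
`H(s) ≤ C_s q^(-(s+1)/2)`. -/
theorem Hfun_asymptotic (s : ℕ) (hs : 1 ≤ s) :
    ∃ C : ℝ, 0 < C ∧
      ∀ (Fq : Type) [Field Fq] [Fintype Fq],
        (Even s →
          |Hfun Fq s - (s.factorial : ℝ) / (2 ^ (s / 2) * ((s / 2).factorial : ℝ)) *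
              (Fintype.card Fq : ℝ) ^ (-(s : ℝ) / 2)|
            ≤ C * (Fintype.card Fq : ℝ) ^ (-((s : ℝ) + 1) / 2)) ∧
        (Odd s →
          Hfun Fq s ≤ C * (Fintype.card Fq : ℝ) ^ (-((s : ℝ) + 1) / 2)) := by
  obtain ⟨C, hC, abs_sub_le⟩ := Hfun.exists_abs_Hfun_sub_le s
  refine ⟨C, hC, fun Fq _ _ => ?_⟩
  have pow_eq := Hfun.rpow_neg_one_half_pow (q := Fintype.card Fq) (Nat.cast_nonneg _)
  have sq_eq : ((Fintype.card Fq : ℝ) ^ (-1 / 2 : ℝ)) ^ 2 = (Fintype.card Fq : ℝ)⁻¹ := by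
    rw [pow_eq, Nat.cast_ofNat, neg_div_self two_ne_zero, Real.rpow_neg_one]
  have abs_sub_le := abs_sub_le Fq _ (by positivity) sq_eq
  rw [pow_eq, pow_eq, Nat.cast_add_one] at abs_sub_le
  refine ⟨fun heven => ?_, fun hodd => ?_⟩
  · obtain ⟨m, rfl⟩ := heven.two_dvd
    have closed_form : ((2 * m).factorial : ℝ) / (2 ^ m * m.factorial) =
        Hfun.numPerfectMatchings (2 * m) := by
      rw [div_eq_iff (by positivity)]
      exact_mod_cast (Hfun.numPerfectMatchings_two_mul m).symm
    rwa [Nat.mul_div_cancel_left m two_pos, closed_form]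
  · obtain ⟨m, rfl⟩ := hodd
    rw [Hfun.numPerfectMatchings_two_mul_add_one, Nat.cast_zero, zero_mul, sub_zero] at abs_sub_le
    exact le_of_abs_le abs_sub_le
end
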